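/- arXiv:2501.07831 — 15 statements merged into one kernel-verified Lean document; each statement's English description precedes it below -/
import Mathlib

section
/- For every real U, the identity F(((γ−1)²/4)·U², U) = ((γ−1)²/2)·U · G(((γ−1)²/4)·U², U) holds. Consequently, the function H^sp(U) = ((γ−1)²/4)·U² satisfies the ODE dH/dU = F(H,U)/G(H,U) at every point U where G(H^sp(U),U) ≠ 0. -/
noncomputable def k₁ (γ μ : ℝ) : ℝ := ((γ + 1) + μ * (3 - γ)) / 2
noncomputable def k₂ (γ μ : ℝ) : ℝ := 2 * (1 - μ) / (γ - 1)
noncomputable def F (γ μ H U : ℝ) : ℝ := 2 * H * (H - (U ^ 2 - k₁ γ μ * U + μ))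
noncomputable def G (γ μ H U : ℝ) : ℝ := H * (U + k₂ γ μ) - U * (U - 1) * (U - μ)
/-- The special solution `H^sp(U) = ((γ-1)²/4) U²`. -/
noncomputable def Hsp (γ U : ℝ) : ℝ := (γ - 1) ^ 2 / 4 * U ^ 2

/-- `F(H^sp(U),U) = ((γ-1)²/2) U · G(H^sp(U),U)` for all `U`, and consequently
`H^sp` satisfies `dH/dU = F/G` wherever `G(H^sp(U),U) ≠ 0`. -/
theorem stmt0 (γ μ : ℝ) (hγ1 : 1 < γ) (hγ3 : γ < 3) (hμ0 : 0 < μ) (hμ1 : μ < 1) :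
    (∀ U : ℝ, F γ μ (Hsp γ U) U = (γ - 1) ^ 2 / 2 * U * G γ μ (Hsp γ U) U) ∧
    (∀ U : ℝ, G γ μ (Hsp γ U) U ≠ 0 →
      deriv (Hsp γ) U = F γ μ (Hsp γ U) U / G γ μ (Hsp γ U) U) := by
  have hg : γ - 1 ≠ 0 := by linarith
  have key : ∀ U : ℝ, F γ μ (Hsp γ U) U = (γ - 1) ^ 2 / 2 * U * G γ μ (Hsp γ U) U := by
    intro U
    simp only [F, G, Hsp, k₁, k₂]
    field_simp
    ring
  refine ⟨key, fun U hU => ?_⟩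
  rw [key U, mul_div_assoc, div_self hU, mul_one]
  have h : HasDerivAt (Hsp γ) ((γ - 1) ^ 2 / 4 * (2 * U)) U := by
    have := (hasDerivAt_pow 2 U).const_mul ((γ - 1) ^ 2 / 4)
    have e : Hsp γ = fun y => (γ - 1) ^ 2 / 4 * y ^ 2 := by
      funext y
      rfl
    rw [e]
    simpa using this
  rw [h.deriv]
  ring
end

section
/- A pair of real numbers (U,H) satisfies F(H,U) = 0, G(H,U) = 0 and Δ(H,U) = 0 simultaneously if and only if (U,H) = (1,0) or (U,H) = (2/(3−γ), ((γ−1)/(3−γ))²). In other words, the only triple points of the system are B = (1,0) and D = (2/(3−γ), ((γ−1)/(3−γ))²). -/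
noncomputable def Dlt (H U : ℝ) : ℝ := (U - 1) ^ 2 - H

/-- the only triple points (`F = G = Δ = 0`) are
`B = (1,0)` and `D = (2/(3-γ), ((γ-1)/(3-γ))²)`. -/
theorem stmt1 (γ μ : ℝ) (hγ1 : 1 < γ) (hγ3 : γ < 3) (hμ0 : 0 < μ) (hμ1 : μ < 1) :
    ∀ U H : ℝ, (F γ μ H U = 0 ∧ G γ μ H U = 0 ∧ Dlt H U = 0) ↔
      ((U, H) = ((1 : ℝ), (0 : ℝ)) ∨
        (U, H) = (2 / (3 - γ), ((γ - 1) / (3 - γ)) ^ 2)) := by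
  intro U H
  have h1 : γ - 1 ≠ 0 := by linarith
  have h3 : 3 - γ ≠ 0 := by linarith
  have hm : 1 - μ ≠ 0 := by linarith
  simp only [F, G, Dlt, k₁, k₂, Prod.mk.injEq]
  constructor
  · rintro ⟨hF, -, hD⟩
    have hH : H = (U - 1) ^ 2 := by linarith
    by_cases hU : U = 1
    · left
      exact ⟨hU, by rw [hH, hU]; norm_num⟩
    · right
      have hU' : U - 1 ≠ 0 := sub_ne_zero.mpr hU
      have hH0 : 2 * H ≠ 0 := by rw [hH]; positivity
      have h := (mul_eq_zero.mp hF).resolve_left hH0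
      have hUe : U = 2 / (3 - γ) := by
        rw [eq_div_iff h3]
        apply mul_left_cancel₀ hm
        rw [hH] at h
        linarith
      refine ⟨hUe, ?_⟩
      rw [hH, hUe]
      congr 1
      field_simp
      ring
  · rintro (⟨rfl, rfl⟩ | ⟨rfl, rfl⟩)
    · norm_num
    · refine ⟨?_, ?_, ?_⟩
      · refine mul_eq_zero_of_right _ ?_
        field_simp
        ring
      · field_simp
        ring
      · field_simp
        ring
end

section
/- The point C satisfies F(H_C,U_C) = 0, G(H_C,U_C) = 0 and Δ(H_C,U_C) ≠ 0, and the slope quadratic at C has exactly two roots, namely C₁ = (γ−1)²μ/(γ+1) and C₂ = (γ−1)·((γ²−2γ+5)μ − (γ+1)²)·μ/(2(γ+1)(γ+1−2μ)); these two roots are distinct and satisfy C₂ < 0 < C₁. -/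
noncomputable def FH (γ μ U H : ℝ) : ℝ := 4 * H - 2 * (U ^ 2 - k₁ γ μ * U + μ)
noncomputable def FU (γ μ U H : ℝ) : ℝ := -2 * H * (2 * U - k₁ γ μ)
noncomputable def GH (γ μ U H : ℝ) : ℝ := U + k₂ γ μ
noncomputable def GU (γ μ U H : ℝ) : ℝ := H - 3 * U ^ 2 + 2 * (1 + μ) * U - μ
/-- The critical point `C = (U_C, H_C)`. -/
noncomputable def UC (γ μ : ℝ) : ℝ := 2 * μ / (γ + 1)
noncomputable def HC (γ μ : ℝ) : ℝ := ((γ - 1) / (γ + 1)) ^ 2 * μ ^ 2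

/-- `C` is a critical point with `Δ ≠ 0`, and the slope quadratic at `C`
has exactly the two distinct roots `C₁ > 0 > C₂`. -/
theorem stmt2 (γ μ : ℝ) (hγ1 : 1 < γ) (hγ3 : γ < 3) (hμ0 : 0 < μ) (hμ1 : μ < 1) :
    F γ μ (HC γ μ) (UC γ μ) = 0 ∧ G γ μ (HC γ μ) (UC γ μ) = 0 ∧
    Dlt (HC γ μ) (UC γ μ) ≠ 0 ∧
    (∀ lam : ℝ,
      GH γ μ (UC γ μ) (HC γ μ) * lam ^ 2
        - (FH γ μ (UC γ μ) (HC γ μ) - GU γ μ (UC γ μ) (HC γ μ)) * lam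
        - FU γ μ (UC γ μ) (HC γ μ) = 0 ↔
      (lam = (γ - 1) ^ 2 * μ / (γ + 1) ∨
       lam = (γ - 1) * ((γ ^ 2 - 2 * γ + 5) * μ - (γ + 1) ^ 2) * μ
              / (2 * (γ + 1) * (γ + 1 - 2 * μ)))) ∧
    (γ - 1) ^ 2 * μ / (γ + 1)
      ≠ (γ - 1) * ((γ ^ 2 - 2 * γ + 5) * μ - (γ + 1) ^ 2) * μ
          / (2 * (γ + 1) * (γ + 1 - 2 * μ)) ∧
    (γ - 1) * ((γ ^ 2 - 2 * γ + 5) * μ - (γ + 1) ^ 2) * μ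
        / (2 * (γ + 1) * (γ + 1 - 2 * μ)) < 0 ∧
    0 < (γ - 1) ^ 2 * μ / (γ + 1) := by
  have hp : 0 < γ + 1 := by linarith
  have hm : 0 < γ - 1 := by linarith
  have hd : 0 < γ + 1 - 2 * μ := by linarith
  have hp' := hp.ne'
  have hm' := hm.ne'
  have hd' := hd.ne'
  have h1 : 0 < (γ - 1) ^ 2 * μ / (γ + 1) := by positivity
  have h2 : (γ - 1) * ((γ ^ 2 - 2 * γ + 5) * μ - (γ + 1) ^ 2) * μ
        / (2 * (γ + 1) * (γ + 1 - 2 * μ)) < 0 := by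
    apply div_neg_of_neg_of_pos _ (by positivity)
    apply mul_neg_of_neg_of_pos _ hμ0
    apply mul_neg_of_pos_of_neg hm
    nlinarith [mul_pos (sub_pos.mpr hμ1) (show 0 < γ ^ 2 - 2 * γ + 5 by nlinarith [sq_nonneg (γ - 1)])]
  have hGH : GH γ μ (UC γ μ) (HC γ μ) = 2 * (γ + 1 - 2 * μ) / ((γ + 1) * (γ - 1)) := by
    unfold GH UC k₂
    field_simp
    ring
  have hGH0 : GH γ μ (UC γ μ) (HC γ μ) ≠ 0 := by
    rw [hGH]; positivity
  refine ⟨?_, ?_, ?_, ?_, ?_, h2, h1⟩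
  · unfold F HC UC k₁
    field_simp
    ring
  · unfold G HC UC k₂
    field_simp
    ring
  · have : Dlt (HC γ μ) (UC γ μ) = (1 - μ) * ((γ + 1 - 2 * μ + (γ - 1) * μ) / (γ + 1)) := by
      unfold Dlt HC UC
      field_simp
      ring
    rw [this]
    have : 0 < 1 - μ := by linarith
    positivity
  · intro lam
    have key : GH γ μ (UC γ μ) (HC γ μ) * lam ^ 2
        - (FH γ μ (UC γ μ) (HC γ μ) - GU γ μ (UC γ μ) (HC γ μ)) * lam
        - FU γ μ (UC γ μ) (HC γ μ) = GH γ μ (UC γ μ) (HC γ μ) *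
        ((lam - (γ - 1) ^ 2 * μ / (γ + 1)) *
         (lam - (γ - 1) * ((γ ^ 2 - 2 * γ + 5) * μ - (γ + 1) ^ 2) * μ
              / (2 * (γ + 1) * (γ + 1 - 2 * μ)))) := by
      rw [hGH]
      unfold FH GU FU HC UC k₁
      field_simp
      ring
    rw [key, mul_eq_zero, mul_eq_zero, sub_eq_zero, sub_eq_zero]
    simp [hGH0]
  · exact (h2.trans h1).ne'
end

section
/- For every real U, the identity G(((γ−1)²/4)·U², U)·((γ+1)U − 2) = −((γ+1)U − 2μ)·U·Δ(((γ−1)²/4)·U², U) holds. In particular, along the special solution H = ((γ−1)²/4)·U², the equation y·dU/dy = G/Δ reduces to the self-similar Burgers ODE y·dU/dy = −((γ+1)U − 2μ)·U/((γ+1)U − 2) at every U with (γ+1)U ≠ 2 and Δ(((γ−1)²/4)U²,U) ≠ 0. -/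
/-- the identity `G(H^sp(U),U)·((γ+1)U-2) = -((γ+1)U-2μ)·U·Δ(H^sp(U),U)`,
and the resulting reduction of `G/Δ` to the self-similar Burgers right-hand side. -/
theorem stmt3 (γ μ : ℝ) (hγ1 : 1 < γ) (hγ3 : γ < 3) (hμ0 : 0 < μ) (hμ1 : μ < 1) :
    (∀ U : ℝ, G γ μ (Hsp γ U) U * ((γ + 1) * U - 2)
      = -(((γ + 1) * U - 2 * μ) * U) * Dlt (Hsp γ U) U) ∧
    (∀ U : ℝ, (γ + 1) * U ≠ 2 → Dlt (Hsp γ U) U ≠ 0 →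
      G γ μ (Hsp γ U) U / Dlt (Hsp γ U) U
        = -(((γ + 1) * U - 2 * μ) * U) / ((γ + 1) * U - 2)) := by
  have hg : γ - 1 ≠ 0 := by linarith
  have key : ∀ U : ℝ, G γ μ (Hsp γ U) U * ((γ + 1) * U - 2)
      = -(((γ + 1) * U - 2 * μ) * U) * Dlt (Hsp γ U) U := by
    intro U
    unfold G Dlt Hsp k₂
    field_simp
    ring
  refine ⟨key, fun U hU hD => ?_⟩
  rw [div_eq_div_iff hD (sub_ne_zero.mpr hU)]
  exact key U
end

section
/- Let K > 0 and U_C = 2μ/(γ+1), and define Φ : (0,U_C) → ℝ by Φ(U) = K·(U_C − U)^((1−μ)/μ)·U^(−1/μ). Then Φ is positive and differentiable on (0,U_C), satisfies Φ'(U)·g(U) = Φ(U) for every U ∈ (0,U_C) (so that the inverse function solves y·dU/dy = g(U)), is strictly decreasing, and satisfies lim_{U→U_C⁻} Φ(U) = 0 and lim_{U→0⁺} Φ(U) = +∞; hence Φ is a bijection from (0,U_C) onto (0,∞). -/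
open Set Filter Topology

/-- Right-hand side of the self-similar Burgers ODE `y dU/dy = g(U)`. -/
noncomputable def g (γ μ U : ℝ) : ℝ := -(((γ + 1) * U - 2 * μ) * U) / ((γ + 1) * U - 2)
/-- `Φ(U) = K (U_C - U)^((1-μ)/μ) U^(-1/μ)` on `(0, U_C)`. -/
noncomputable def Φ (γ μ K U : ℝ) : ℝ :=
  K * (UC γ μ - U) ^ ((1 - μ) / μ) * U ^ (-(1 / μ))

/-- `Φ` is a positive, differentiable, strictly decreasing solution of
`Φ'(U) g(U) = Φ(U)` on `(0,U_C)` with `Φ → 0` at `U_C⁻`, `Φ → ∞` at `0⁺`; hence a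
bijection from `(0,U_C)` onto `(0,∞)`. -/
theorem stmt4 (γ μ K : ℝ) (hγ1 : 1 < γ) (hγ3 : γ < 3) (hμ0 : 0 < μ) (hμ1 : μ < 1)
    (hK : 0 < K) :
    (∀ U ∈ Ioo (0 : ℝ) (UC γ μ), 0 < Φ γ μ K U) ∧
    (∀ U ∈ Ioo (0 : ℝ) (UC γ μ), DifferentiableAt ℝ (Φ γ μ K) U) ∧
    (∀ U ∈ Ioo (0 : ℝ) (UC γ μ), deriv (Φ γ μ K) U * g γ μ U = Φ γ μ K U) ∧
    StrictAntiOn (Φ γ μ K) (Ioo (0 : ℝ) (UC γ μ)) ∧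
    Tendsto (Φ γ μ K) (𝓝[<] (UC γ μ)) (𝓝 0) ∧
    Tendsto (Φ γ μ K) (𝓝[>] (0 : ℝ)) atTop ∧
    BijOn (Φ γ μ K) (Ioo (0 : ℝ) (UC γ μ)) (Ioi (0 : ℝ)) := by
  have hc : 0 < γ + 1 := by linarith
  have hUC : 0 < UC γ μ := by unfold UC; positivity
  have ha : 0 < (1 - μ) / μ := div_pos (by linarith) hμ0
  have hb : 0 < 1 / μ := by positivity
  have hpos : ∀ U ∈ Ioo (0 : ℝ) (UC γ μ), 0 < Φ γ μ K U := by
    rintro U ⟨h0, h1⟩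
    have h2 : 0 < UC γ μ - U := by linarith
    unfold Φ
    positivity
  have hder : ∀ U ∈ Ioo (0 : ℝ) (UC γ μ), HasDerivAt (Φ γ μ K)
      (Φ γ μ K U * (-((1 - μ) / μ) / (UC γ μ - U) - (1 / μ) / U)) U := by
    rintro U ⟨h0, h1⟩
    have h2 : 0 < UC γ μ - U := by linarith
    have d1 : HasDerivAt (fun U : ℝ => UC γ μ - U) (-1) U := by
      simpa using (hasDerivAt_id U).const_sub (UC γ μ)
    have d2 := (d1.rpow_const (p := (1 - μ) / μ) (Or.inl h2.ne')).const_mul K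
    have d3 := (hasDerivAt_id U).rpow_const (p := -(1 / μ)) (Or.inl h0.ne')
    have d4 := d2.mul d3
    refine d4.congr_deriv ?_
    unfold Φ
    simp only [id]
    rw [Real.rpow_sub_one h2.ne', Real.rpow_sub_one h0.ne']
    field_simp
    ring
  have hdiff : ∀ U ∈ Ioo (0 : ℝ) (UC γ μ), DifferentiableAt ℝ (Φ γ μ K) U :=
    fun U hU => (hder U hU).differentiableAt
  have hanti : StrictAntiOn (Φ γ μ K) (Ioo (0 : ℝ) (UC γ μ)) := by
    rintro x ⟨hx0, hx1⟩ y ⟨hy0, hy1⟩ hxy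
    have h1 : (UC γ μ - y) ^ ((1 - μ) / μ) < (UC γ μ - x) ^ ((1 - μ) / μ) :=
      Real.rpow_lt_rpow (by linarith) (by linarith) ha
    have h2 : y ^ (-(1 / μ)) < x ^ (-(1 / μ)) :=
      Real.rpow_lt_rpow_of_neg hx0 hxy (by linarith)
    have h3 : 0 < UC γ μ - y := by linarith
    unfold Φ
    exact mul_lt_mul'' (mul_lt_mul_of_pos_left h1 hK) h2 (by positivity) (by positivity)
  have hl0 : Tendsto (Φ γ μ K) (𝓝[<] (UC γ μ)) (𝓝 0) := by
    have hcont : ContinuousAt (Φ γ μ K) (UC γ μ) := by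
      unfold Φ
      refine ContinuousAt.mul (continuousAt_const.mul ?_) ?_
      · exact ContinuousAt.rpow_const (by fun_prop) (Or.inr ha.le)
      · exact ContinuousAt.rpow_const continuousAt_id (Or.inl hUC.ne')
    have hz : Φ γ μ K (UC γ μ) = 0 := by
      unfold Φ
      rw [sub_self, Real.zero_rpow ha.ne']
      ring
    have := hcont.tendsto
    rw [hz] at this
    exact this.mono_left nhdsWithin_le_nhds
  have hl1 : Tendsto (Φ γ μ K) (𝓝[>] (0 : ℝ)) atTop := by
    have h1 : ContinuousAt (fun U => K * (UC γ μ - U) ^ ((1 - μ) / μ)) 0 :=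
      continuousAt_const.mul (ContinuousAt.rpow_const (by fun_prop) (Or.inr ha.le))
    have h2 : Tendsto (fun U : ℝ => U ^ (-(1 / μ))) (𝓝[>] (0 : ℝ)) atTop :=
      tendsto_rpow_neg_nhdsGT_zero (by linarith)
    have h3 := h1.tendsto.mono_left (nhdsWithin_le_nhds (s := Ioi (0 : ℝ)))
    refine Tendsto.pos_mul_atTop ?_ h3 h2
    rw [sub_zero]
    positivity
  refine ⟨hpos, hdiff, ?_, hanti, hl0, hl1, hpos, hanti.injOn, ?_⟩
  · intro U hU
    rw [(hder U hU).deriv, mul_assoc]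
    obtain ⟨h0, h1⟩ := hU
    have e : UC γ μ - U = (2 * μ - (γ + 1) * U) / (γ + 1) := by
      unfold UC
      field_simp
    have h2 : 0 < 2 * μ - (γ + 1) * U := by
      have : 0 < (2 * μ - (γ + 1) * U) / (γ + 1) := by rw [← e]; linarith
      exact (div_pos_iff_of_pos_right hc).1 this
    have h3 : (γ + 1) * U - 2 ≠ 0 := by
      intro h
      linarith
    have h4 : (-((1 - μ) / μ) / (UC γ μ - U) - (1 / μ) / U) * g γ μ U = 1 := by
      rw [e]
      unfold g
      have h5 := h2.ne'
      have h6 : (γ + 1) * U - 2 * μ = -(2 * μ - (γ + 1) * U) := by ring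
      rw [h6]
      generalize hw : 2 * μ - (γ + 1) * U = w at h5 ⊢
      generalize hv : (γ + 1) * U - 2 = v at h3 ⊢
      have h7 := hc.ne'
      field_simp
      subst hw hv
      ring
    rw [h4, mul_one]
  · have hco : ContinuousOn (Φ γ μ K) (Ioo (0 : ℝ) (UC γ μ)) :=
      fun U hU => (hdiff U hU).continuousAt.continuousWithinAt
    exact isPreconnected_Ioo.intermediate_value_Ioi
      (le_principal_iff.2 (Ioo_mem_nhdsLT hUC)) (le_principal_iff.2 (Ioo_mem_nhdsGT hUC)) hco hl0 hl1
end

section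
/- Let K > 0, U_C = 2μ/(γ+1), and let U^sp : (0,∞) → (0,U_C) be the inverse of the strictly decreasing bijection Φ(U) = K·(U_C − U)^((1−μ)/μ)·U^(−1/μ). Then U^sp is differentiable, satisfies y·(U^sp)'(y) = g(U^sp(y)) for all y ∈ (0,∞), and has the asymptotics lim_{y→∞} y^μ·U^sp(y) = K^μ·U_C^(1−μ) and lim_{y→0⁺} (U_C − U^sp(y))·y^(−μ/(1−μ)) = U_C^(1/(1−μ))·K^(−μ/(1−μ)). -/
open Set Filter Topology

theorem Phi_anti (γ μ K : ℝ) (hμ0 : 0 < μ) (hμ1 : μ < 1) (hK : 0 < K) {a b : ℝ}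
    (ha : 0 < a) (hab : a ≤ b) (hb : b < UC γ μ) : Φ γ μ K b ≤ Φ γ μ K a := by
  unfold Φ
  have h1 : (UC γ μ - b) ^ ((1 - μ) / μ) ≤ (UC γ μ - a) ^ ((1 - μ) / μ) :=
    Real.rpow_le_rpow (by linarith) (by linarith) (div_nonneg (by linarith) hμ0.le)
  have h2 : b ^ (-(1 / μ)) ≤ a ^ (-(1 / μ)) :=
    Real.rpow_le_rpow_of_nonpos ha hab (by have := one_div_pos.2 hμ0; linarith)
  have h3 : 0 ≤ b ^ (-(1 / μ)) := Real.rpow_nonneg (by linarith) _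
  have h4 : 0 ≤ (UC γ μ - a) ^ ((1 - μ) / μ) := Real.rpow_nonneg (by linarith) _
  gcongr

theorem Phi_pos (γ μ K : ℝ) (hK : 0 < K) {a : ℝ}
    (ha : 0 < a) (hb : a < UC γ μ) : 0 < Φ γ μ K a := by
  unfold Φ
  have h1 := Real.rpow_pos_of_pos (sub_pos.2 hb) ((1 - μ) / μ)
  have h2 := Real.rpow_pos_of_pos ha (-(1 / μ))
  positivity

theorem Phi_deriv (γ μ K : ℝ) (hμ0 : 0 < μ) {a : ℝ}
    (ha : 0 < a) (hb : a < UC γ μ) :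
    HasStrictDerivAt (Φ γ μ K)
      (-(Φ γ μ K a * ((UC γ μ - μ * a) / (μ * a * (UC γ μ - a))))) a := by
  have hd : 0 < UC γ μ - a := sub_pos.2 hb
  have h1 : HasStrictDerivAt (fun U : ℝ => (UC γ μ - U) ^ ((1 - μ) / μ))
      (((1 - μ) / μ) * (UC γ μ - a) ^ ((1 - μ) / μ - 1) * (-1)) a :=
    (Real.hasStrictDerivAt_rpow_const_of_ne hd.ne' ((1 - μ) / μ)).comp a
      ((hasStrictDerivAt_id a).const_sub (UC γ μ))
  have h2 := Real.hasStrictDerivAt_rpow_const_of_ne ha.ne' (-(1 / μ))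
  have h3 := (h1.const_mul K).mul h2
  refine h3.congr_deriv ?_
  unfold Φ
  rw [Real.rpow_sub hd, Real.rpow_sub ha, Real.rpow_one, Real.rpow_one]
  have := hd.ne'
  field_simp
  ring

/-- the inverse `U^sp` of `Φ` is differentiable, solves
`y (U^sp)'(y) = g(U^sp(y))` on `(0,∞)`, and has the stated asymptotics as
`y → ∞` and `y → 0⁺`. -/
theorem stmt5 (γ μ K : ℝ) (hγ1 : 1 < γ) (hγ3 : γ < 3) (hμ0 : 0 < μ) (hμ1 : μ < 1)
    (hK : 0 < K) (Usp : ℝ → ℝ)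
    (hmem : ∀ y ∈ Ioi (0 : ℝ), Usp y ∈ Ioo (0 : ℝ) (UC γ μ))
    (hrinv : ∀ y ∈ Ioi (0 : ℝ), Φ γ μ K (Usp y) = y)
    (hlinv : ∀ U ∈ Ioo (0 : ℝ) (UC γ μ), Usp (Φ γ μ K U) = U) :
    (∀ y ∈ Ioi (0 : ℝ), DifferentiableAt ℝ Usp y ∧ y * deriv Usp y = g γ μ (Usp y)) ∧
    Tendsto (fun y : ℝ => y ^ μ * Usp y) atTop (𝓝 (K ^ μ * (UC γ μ) ^ (1 - μ))) ∧
    Tendsto (fun y : ℝ => (UC γ μ - Usp y) * y ^ (-(μ / (1 - μ)))) (𝓝[>] (0 : ℝ))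
      (𝓝 ((UC γ μ) ^ (1 / (1 - μ)) * K ^ (-(μ / (1 - μ))))) := by
  have hUC : 0 < UC γ μ := by unfold UC; positivity
  have hm : 0 < 1 - μ := by linarith
  refine ⟨?_, ?_, ?_⟩
  · intro y hy
    obtain ⟨h0, h1⟩ := hmem y hy
    have hy' : 0 < y := hy
    have hD := Phi_deriv γ μ K hμ0 h0 h1
    have hΦ := hrinv y hy
    rw [hΦ] at hD
    have hd : 0 < UC γ μ - Usp y := sub_pos.2 h1
    have hq : 0 < UC γ μ - μ * Usp y := by nlinarith
    have hne : -(y * ((UC γ μ - μ * Usp y) / (μ * Usp y * (UC γ μ - Usp y)))) ≠ 0 := by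
      have : 0 < y * ((UC γ μ - μ * Usp y) / (μ * Usp y * (UC γ μ - Usp y))) := by positivity
      exact neg_ne_zero.2 this.ne'
    have hinv := hD.to_local_left_inverse hne (g := Usp) (by
      filter_upwards [Ioo_mem_nhds h0 h1] with U hU using hlinv U hU)
    rw [hΦ] at hinv
    have hder := hinv.hasDerivAt
    refine ⟨hder.differentiableAt, ?_⟩
    rw [hder.deriv]
    unfold g
    set u := Usp y with hu
    have hc : (γ + 1) * UC γ μ = 2 * μ := by unfold UC; field_simp
    have e1 : (γ + 1) * u - 2 * μ = -((γ + 1) * (UC γ μ - u)) := by linarith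
    have e2 : (γ + 1) * u - 2 = -((γ + 1) * (UC γ μ - μ * u)) / μ := by
      field_simp; linarith
    rw [e1, e2]
    have hg : 0 < γ + 1 := by linarith
    have := hd.ne'
    have := hq.ne'
    field_simp
  · have hlim : Tendsto Usp atTop (𝓝 0) := by
      rw [tendsto_order]
      constructor
      · intro a ha
        filter_upwards [eventually_gt_atTop 0] with y hy using ha.trans (hmem y hy).1
      · intro a ha
        have hb0 : 0 < min a (UC γ μ / 2) := by positivity
        filter_upwards [eventually_gt_atTop 0,
          eventually_gt_atTop (Φ γ μ K (min a (UC γ μ / 2)))] with y hy hy2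
        by_contra! h
        have := Phi_anti γ μ K hμ0 hμ1 hK hb0 ((min_le_left _ _).trans h) (hmem y hy).2
        rw [hrinv y hy] at this
        linarith
    have h2 : Tendsto (fun y => K ^ μ * (UC γ μ - Usp y) ^ (1 - μ)) atTop
        (𝓝 (K ^ μ * (UC γ μ - 0) ^ (1 - μ))) :=
      ((tendsto_const_nhds.sub hlim).rpow_const (Or.inr hm.le)).const_mul _
    rw [sub_zero] at h2
    refine h2.congr' ?_
    filter_upwards [eventually_gt_atTop 0] with y hy
    obtain ⟨h0, h1⟩ := hmem y hy
    have hd : 0 < UC γ μ - Usp y := sub_pos.2 h1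
    have key : y ^ μ = (Φ γ μ K (Usp y)) ^ μ := by
      rw [hrinv y hy]
    rw [key]
    unfold Φ
    rw [Real.mul_rpow (by positivity) (by positivity), Real.mul_rpow hK.le (by positivity),
      ← Real.rpow_mul hd.le, ← Real.rpow_mul h0.le]
    have e1 : (1 - μ) / μ * μ = 1 - μ := by field_simp
    have e2 : -(1 / μ) * μ = -1 := by field_simp
    rw [e1, e2, Real.rpow_neg_one]
    field_simp
  · have hlim : Tendsto Usp (𝓝[>] 0) (𝓝 (UC γ μ)) := by
      rw [tendsto_order]
      constructor
      · intro a ha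
        have hb0 : 0 < max a (UC γ μ / 2) := lt_max_of_lt_right (by positivity)
        have hb1 : max a (UC γ μ / 2) < UC γ μ := max_lt ha (by linarith)
        have hp := Phi_pos γ μ K hK hb0 hb1
        filter_upwards [Ioo_mem_nhdsGT hp] with y hy
        by_contra! h
        have := Phi_anti γ μ K hμ0 hμ1 hK (hmem y hy.1).1 (h.trans (le_max_left _ _)) hb1
        rw [hrinv y hy.1] at this
        linarith [hy.2]
      · intro a ha
        filter_upwards [self_mem_nhdsWithin] with y hy using (hmem y hy).2.trans ha
    have h2 : Tendsto (fun y => (Usp y) ^ (1 / (1 - μ)) * K ^ (-(μ / (1 - μ)))) (𝓝[>] 0)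
        (𝓝 ((UC γ μ) ^ (1 / (1 - μ)) * K ^ (-(μ / (1 - μ))))) :=
      (hlim.rpow_const (Or.inl hUC.ne')).mul_const _
    refine h2.congr' ?_
    filter_upwards [self_mem_nhdsWithin] with y hy
    obtain ⟨h0, h1⟩ := hmem y hy
    have hd : 0 < UC γ μ - Usp y := sub_pos.2 h1
    have key : y ^ (-(μ / (1 - μ))) = (Φ γ μ K (Usp y)) ^ (-(μ / (1 - μ))) := by
      rw [hrinv y hy]
    rw [key]
    unfold Φ
    rw [Real.mul_rpow (by positivity) (by positivity), Real.mul_rpow hK.le (by positivity),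
      ← Real.rpow_mul hd.le, ← Real.rpow_mul h0.le]
    have e1 : (1 - μ) / μ * (-(μ / (1 - μ))) = -1 := by field_simp
    have e2 : -(1 / μ) * (-(μ / (1 - μ))) = 1 / (1 - μ) := by field_simp
    rw [e1, e2, Real.rpow_neg_one]
    field_simp
end

section
/- Let K > 0 and U_C = 2μ/(γ+1), and define Φ_L : (−∞,0) → ℝ by Φ_L(U) = K·(U_C − U)^((1−μ)/μ)·(−U)^(−1/μ). Then Φ_L is positive and differentiable, satisfies Φ_L'(U)·g(U) = Φ_L(U) for every U < 0 (so that its inverse solves y·dU/dy = g(U)), is strictly increasing, satisfies lim_{U→−∞} Φ_L(U) = 0 and lim_{U→0⁻} Φ_L(U) = +∞ (hence Φ_L is a bijection from (−∞,0) onto (0,∞)), and moreover lim_{U→−∞} U·Φ_L(U) = −K and lim_{U→0⁻} U·(Φ_L(U))^μ = −K^μ·U_C^(1−μ). -/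
open Set Filter Topology

/-- `Φ_L(U) = K (U_C - U)^((1-μ)/μ) (-U)^(-1/μ)` on `(-∞, 0)`. -/
noncomputable def ΦL (γ μ K U : ℝ) : ℝ :=
  K * (UC γ μ - U) ^ ((1 - μ) / μ) * (-U) ^ (-(1 / μ))

theorem UC_pos (γ μ : ℝ) (hγ1 : 1 < γ) (hμ0 : 0 < μ) : 0 < UC γ μ := by
  unfold UC
  have : 0 < γ + 1 := by linarith
  positivity

theorem ΦL_pos (γ μ K : ℝ) (hγ1 : 1 < γ) (hμ0 : 0 < μ) (hK : 0 < K) (U : ℝ) (hU : U < 0) :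
    0 < ΦL γ μ K U := by
  have hc := UC_pos γ μ hγ1 hμ0
  have h1 : 0 < UC γ μ - U := by linarith
  have h2 : 0 < -U := by linarith
  unfold ΦL
  positivity

theorem ΦL_hasDerivAt (γ μ K : ℝ) (hγ1 : 1 < γ) (hμ0 : 0 < μ) (U : ℝ)
    (hU : U < 0) :
    HasDerivAt (ΦL γ μ K)
      (ΦL γ μ K U * ((2 / (γ + 1) - U) / ((UC γ μ - U) * (-U)))) U := by
  have hc := UC_pos γ μ hγ1 hμ0
  have h1 : 0 < UC γ μ - U := by linarith
  have h2 : 0 < -U := by linarith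
  have d1 : HasDerivAt (fun U : ℝ => UC γ μ - U) (-1) U := (hasDerivAt_id U).const_sub _
  have d2 : HasDerivAt (fun U : ℝ => -U) (-1) U := (hasDerivAt_id U).neg
  have e1 := (d1.rpow_const (p := (1 - μ) / μ) (Or.inl h1.ne')).const_mul K
  have e2 := d2.rpow_const (p := -(1 / μ)) (Or.inl h2.ne')
  have e := e1.mul e2
  have hγ : γ + 1 ≠ 0 := by linarith
  have hk : 2 / (γ + 1) = UC γ μ / μ := by
    unfold UC; field_simp
  refine e.congr_deriv ?_
  rw [hk]
  simp only [ΦL]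
  rw [Real.rpow_sub_one h1.ne', Real.rpow_sub_one h2.ne']
  generalize (UC γ μ - U) ^ ((1 - μ) / μ) = A
  generalize (-U) ^ (-(1 / μ)) = B
  have h3 := h1.ne'
  have h4 := hU.ne
  generalize UC γ μ = c at *
  field_simp
  ring

/-- `Φ_L` is a positive, differentiable, strictly increasing solution of
`Φ_L'(U) g(U) = Φ_L(U)` on `(-∞,0)`, with `Φ_L → 0` as `U → -∞` and `Φ_L → ∞` as
`U → 0⁻` (hence a bijection onto `(0,∞)`), and moreover `U Φ_L(U) → -K` as `U → -∞`
and `U (Φ_L(U))^μ → -K^μ U_C^(1-μ)` as `U → 0⁻`. -/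
theorem stmt6 (γ μ K : ℝ) (hγ1 : 1 < γ) (hγ3 : γ < 3) (hμ0 : 0 < μ) (hμ1 : μ < 1)
    (hK : 0 < K) :
    (∀ U ∈ Iio (0 : ℝ), 0 < ΦL γ μ K U) ∧
    (∀ U ∈ Iio (0 : ℝ), DifferentiableAt ℝ (ΦL γ μ K) U) ∧
    (∀ U ∈ Iio (0 : ℝ), deriv (ΦL γ μ K) U * g γ μ U = ΦL γ μ K U) ∧
    StrictMonoOn (ΦL γ μ K) (Iio (0 : ℝ)) ∧
    Tendsto (ΦL γ μ K) atBot (𝓝 0) ∧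
    Tendsto (ΦL γ μ K) (𝓝[<] (0 : ℝ)) atTop ∧
    BijOn (ΦL γ μ K) (Iio (0 : ℝ)) (Ioi (0 : ℝ)) ∧
    Tendsto (fun U : ℝ => U * ΦL γ μ K U) atBot (𝓝 (-K)) ∧
    Tendsto (fun U : ℝ => U * (ΦL γ μ K U) ^ μ) (𝓝[<] (0 : ℝ))
      (𝓝 (-(K ^ μ * (UC γ μ) ^ (1 - μ)))) := by
  have hc := UC_pos γ μ hγ1 hμ0
  have hpos := ΦL_pos γ μ K hγ1 hμ0 hK
  have hder := ΦL_hasDerivAt γ μ K hγ1 hμ0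
  have hγ : 0 < γ + 1 := by linarith
  have hmono : StrictMonoOn (ΦL γ μ K) (Iio (0 : ℝ)) := by
    apply strictMonoOn_of_deriv_pos (convex_Iio 0)
    · exact fun U hU => (hder U hU).continuousAt.continuousWithinAt
    · intro U hU
      rw [interior_Iio] at hU
      have hU : U < 0 := hU
      rw [(hder U hU).deriv]
      have h1 : 0 < UC γ μ - U := by linarith
      have h2 : 0 < -U := by linarith
      have h3 : 0 < 2 / (γ + 1) - U := by
        have : 0 < 2 / (γ + 1) := by positivity
        linarith
      have := hpos U hU
      positivity
  have hbot : Tendsto (fun U : ℝ => U * ΦL γ μ K U) atBot (𝓝 (-K)) := by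
    have r : Tendsto (fun U : ℝ => 1 - UC γ μ * U⁻¹) atBot (𝓝 1) := by
      simpa using (tendsto_inv_atBot_zero.const_mul (UC γ μ)).const_sub (1 : ℝ)
    have r2 := (r.rpow_const (p := (1 - μ) / μ) (Or.inl one_ne_zero)).const_mul (-K)
    rw [Real.one_rpow, mul_one] at r2
    refine r2.congr' ?_
    filter_upwards [Iio_mem_atBot (0 : ℝ)] with U hU
    have hU : U < 0 := hU
    have h1 : 0 < UC γ μ - U := by linarith
    have h2 : 0 < -U := by linarith
    have e : 1 - UC γ μ * U⁻¹ = (UC γ μ - U) / (-U) := by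
      have := hU.ne
      field_simp
      ring
    have e2 : -(1 / μ) = -((1 - μ) / μ) - 1 := by
      field_simp
      ring
    rw [e, Real.div_rpow h1.le h2.le]
    simp only [ΦL]
    rw [e2, Real.rpow_sub_one h2.ne', Real.rpow_neg h2.le]
    have := (Real.rpow_pos_of_pos h2 ((1 - μ) / μ)).ne'
    have := hU.ne
    field_simp
  have hzero : Tendsto (ΦL γ μ K) atBot (𝓝 0) := by
    have := hbot.mul tendsto_inv_atBot_zero
    rw [mul_zero] at this
    refine this.congr' ?_
    filter_upwards [Iio_mem_atBot (0 : ℝ)] with U hU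
    have := (show U < 0 from hU).ne
    field_simp
  have hcU : Tendsto (fun U : ℝ => UC γ μ - U) (𝓝[<] 0) (𝓝 (UC γ μ)) := by
    have : Tendsto (fun U : ℝ => UC γ μ - U) (𝓝 0) (𝓝 (UC γ μ - 0)) :=
      (continuous_const.sub continuous_id).tendsto 0
    rw [sub_zero] at this
    exact this.mono_left nhdsWithin_le_nhds
  have htop : Tendsto (ΦL γ μ K) (𝓝[<] (0 : ℝ)) atTop := by
    have a := (hcU.rpow_const (p := (1 - μ) / μ) (Or.inl hc.ne')).const_mul K
    have hn : Tendsto (fun U : ℝ => -U) (𝓝[<] 0) (𝓝[>] 0) := by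
      simpa using tendsto_neg_nhdsLT (a := (0 : ℝ))
    have b := (tendsto_rpow_neg_nhdsGT_zero (show -(1 / μ) < 0 by
      have : 0 < 1 / μ := by positivity
      linarith)).comp hn
    exact a.pos_mul_atTop (by positivity) b
  refine ⟨hpos, fun U hU => (hder U hU).differentiableAt, ?_, hmono, hzero, htop, ?_, hbot, ?_⟩
  · intro U hU
    have hU : U < 0 := hU
    rw [(hder U hU).deriv]
    generalize ΦL γ μ K U = P
    have h1 : 0 < UC γ μ - U := by linarith
    have h5 : (γ + 1) * U - 2 < 0 := by nlinarith
    have e1 : (γ + 1) * U - 2 * μ = -((γ + 1) * (UC γ μ - U)) := by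
      unfold UC; field_simp; ring
    have e2 : 2 / (γ + 1) - U = -((γ + 1) * U - 2) / (γ + 1) := by
      field_simp; ring
    unfold g
    rw [e1, e2]
    have := h5.ne
    have := h1.ne'
    have := hU.ne
    generalize UC γ μ - U = c at *
    generalize (γ + 1) * U - 2 = d at *
    field_simp
  · refine ⟨hpos, hmono.injOn, ?_⟩
    exact isPreconnected_Iio.intermediate_value_Ioi (l₁ := atBot) (l₂ := 𝓝[<] (0 : ℝ))
      (le_principal_iff.2 (Iio_mem_atBot 0)) (le_principal_iff.2 self_mem_nhdsWithin)
      (fun U hU => (hder U hU).continuousAt.continuousWithinAt) hzero htop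
  · have a := ((hcU.rpow_const (p := 1 - μ) (Or.inl hc.ne')).const_mul (K ^ μ)).neg
    refine a.congr' ?_
    filter_upwards [self_mem_nhdsWithin] with U hU
    have hU : U < 0 := hU
    have h1 : 0 < UC γ μ - U := by linarith
    have h2 : 0 < -U := by linarith
    simp only [ΦL]
    rw [Real.mul_rpow (by positivity) (by positivity), Real.mul_rpow hK.le (by positivity),
      ← Real.rpow_mul h1.le, ← Real.rpow_mul h2.le, div_mul_cancel₀ _ hμ0.ne',
      show -(1 / μ) * μ = -1 by field_simp, Real.rpow_neg_one]
    have := hU.ne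
    field_simp
end

section
/- Let K > 0, U_C = 2μ/(γ+1), U_D = 2/(3−γ), and set y_D = −K·(U_D − U_C)^((1−μ)/μ)·U_D^(−1/μ), which is a finite negative number. Define Φ_ED : (U_D,∞) → ℝ by Φ_ED(U) = −K·(U − U_C)^((1−μ)/μ)·U^(−1/μ). Then Φ_ED is negative and differentiable, satisfies Φ_ED'(U)·g(U) = Φ_ED(U) for every U > U_D (so that its inverse solves y·dU/dy = g(U)), is strictly increasing, satisfies lim_{U→U_D⁺} Φ_ED(U) = y_D and lim_{U→∞} Φ_ED(U) = 0 (hence Φ_ED is a bijection from (U_D,∞) onto (y_D,0)), and moreover lim_{U→∞} U·Φ_ED(U) = −K. -/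
open Set Filter Topology

noncomputable def UD (γ : ℝ) : ℝ := 2 / (3 - γ)
/-- `y_D = -K (U_D - U_C)^((1-μ)/μ) U_D^(-1/μ)`. -/
noncomputable def yD (γ μ K : ℝ) : ℝ :=
  -K * (UD γ - UC γ μ) ^ ((1 - μ) / μ) * (UD γ) ^ (-(1 / μ))
/-- `Φ_ED(U) = -K (U - U_C)^((1-μ)/μ) U^(-1/μ)` on `(U_D, ∞)`. -/
noncomputable def ΦED (γ μ K U : ℝ) : ℝ :=
  -K * (U - UC γ μ) ^ ((1 - μ) / μ) * U ^ (-(1 / μ))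

/-- `y_D` is finite negative, and `Φ_ED` is a negative, differentiable,
strictly increasing solution of `Φ_ED'(U) g(U) = Φ_ED(U)` on `(U_D,∞)` with
`Φ_ED → y_D` at `U_D⁺` and `Φ_ED → 0` at `∞` (hence a bijection onto `(y_D,0)`),
and `U Φ_ED(U) → -K` as `U → ∞`. -/
theorem stmt7 (γ μ K : ℝ) (hγ1 : 1 < γ) (hγ3 : γ < 3) (hμ0 : 0 < μ) (hμ1 : μ < 1)
    (hK : 0 < K) :
    yD γ μ K < 0 ∧
    (∀ U ∈ Ioi (UD γ), ΦED γ μ K U < 0) ∧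
    (∀ U ∈ Ioi (UD γ), DifferentiableAt ℝ (ΦED γ μ K) U) ∧
    (∀ U ∈ Ioi (UD γ), deriv (ΦED γ μ K) U * g γ μ U = ΦED γ μ K U) ∧
    StrictMonoOn (ΦED γ μ K) (Ioi (UD γ)) ∧
    Tendsto (ΦED γ μ K) (𝓝[>] (UD γ)) (𝓝 (yD γ μ K)) ∧
    Tendsto (ΦED γ μ K) atTop (𝓝 0) ∧
    BijOn (ΦED γ μ K) (Ioi (UD γ)) (Ioo (yD γ μ K) (0 : ℝ)) ∧
    Tendsto (fun U : ℝ => U * ΦED γ μ K U) atTop (𝓝 (-K)) := by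
  have hUD : 0 < UD γ := by unfold UD; apply div_pos <;> linarith
  have hUD1 : 2 < (γ + 1) * UD γ := by
    unfold UD
    rw [← mul_div_assoc, lt_div_iff₀ (by linarith)]
    nlinarith
  have hCm : (γ + 1) * UC γ μ = 2 * μ := by
    unfold UC; field_simp
  have hc : ∀ U, UD γ ≤ U → 0 < U ∧ 0 < U - UC γ μ ∧ 0 < (γ + 1) * U - 2 := by
    intro U hU
    have h1 : (γ + 1) * UD γ ≤ (γ + 1) * U := mul_le_mul_of_nonneg_left hU (by linarith)
    refine ⟨by linarith, ?_, by linarith⟩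
    by_contra h
    have : (γ + 1) * U ≤ (γ + 1) * UC γ μ := mul_le_mul_of_nonneg_left (by linarith) (by linarith)
    linarith
  have hneg : ∀ U, UD γ ≤ U → ΦED γ μ K U < 0 := by
    intro U hU
    obtain ⟨h0, h1, _⟩ := hc U hU
    have p1 := Real.rpow_pos_of_pos h1 ((1 - μ) / μ)
    have p2 := Real.rpow_pos_of_pos h0 (-(1 / μ))
    have := mul_pos (mul_pos hK p1) p2
    unfold ΦED
    linarith
  have hder : ∀ U, UD γ ≤ U → HasDerivAt (ΦED γ μ K) (ΦED γ μ K U / g γ μ U) U := by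
    intro U hU
    obtain ⟨h0, h1, h2⟩ := hc U hU
    have d1 : HasDerivAt (fun U : ℝ => (U - UC γ μ) ^ ((1 - μ) / μ)) _ U :=
      ((hasDerivAt_id U).sub_const (UC γ μ)).rpow_const (Or.inl h1.ne')
    have d2 : HasDerivAt (fun U : ℝ => U ^ (-(1 / μ))) _ U :=
      (hasDerivAt_id U).rpow_const (Or.inl h0.ne')
    have d := (d1.const_mul (-K)).mul d2
    refine HasDerivAt.congr_deriv (f := ΦED γ μ K) d ?_
    simp only [id]
    rw [Real.rpow_sub_one h1.ne', Real.rpow_sub_one h0.ne']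
    unfold ΦED g
    have e : (γ + 1) * U - 2 * μ = (γ + 1) * (U - UC γ μ) := by rw [mul_sub, hCm]
    have hg1 : γ + 1 ≠ 0 := by linarith
    rw [e]
    generalize (U - UC γ μ) ^ ((1 - μ) / μ) = A
    generalize U ^ (-(1 / μ)) = B
    have e2 : μ = (γ + 1) * UC γ μ / 2 := by linarith
    have hC0 : UC γ μ ≠ 0 := by
      intro h; rw [h] at hCm; linarith
    generalize UC γ μ = C at *
    subst e2
    have := h1.ne'
    have := h0.ne'
    have := h2.ne'
    field_simp
    ring
  have hgneg : ∀ U, UD γ ≤ U → g γ μ U < 0 := by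
    intro U hU
    obtain ⟨h0, h1, h2⟩ := hc U hU
    unfold g
    apply div_neg_of_neg_of_pos _ h2
    have : 0 < (γ + 1) * U - 2 * μ := by linarith
    have := mul_pos this h0
    linarith
  have hcont : ContinuousOn (ΦED γ μ K) (Ici (UD γ)) := fun U hU =>
    (hder U hU).continuousAt.continuousWithinAt
  have hmono : StrictMonoOn (ΦED γ μ K) (Ici (UD γ)) := by
    apply strictMonoOn_of_deriv_pos (convex_Ici _) hcont
    intro U hU
    rw [interior_Ici] at hU
    have hU' : UD γ ≤ U := le_of_lt hU
    rw [(hder U hU').deriv]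
    exact div_pos_of_neg_of_neg (hneg U hU') (hgneg U hU')
  have hmulK : Tendsto (fun U : ℝ => U * ΦED γ μ K U) atTop (𝓝 (-K)) := by
    have t1 : Tendsto (fun U : ℝ => 1 - UC γ μ / U) atTop (𝓝 1) := by
      simpa using tendsto_const_nhds.sub
        ((tendsto_const_nhds (x := UC γ μ)).div_atTop (tendsto_id (α := ℝ) (x := atTop)))
    have t2 := (t1.rpow_const (p := (1 - μ) / μ) (Or.inl one_ne_zero)).const_mul (-K)
    rw [Real.one_rpow, mul_one] at t2
    refine t2.congr' ?_
    filter_upwards [eventually_ge_atTop (UD γ)] with U hU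
    obtain ⟨h0, h1, h2⟩ := hc U hU
    have e : 1 - UC γ μ / U = (U - UC γ μ) / U := by field_simp
    have e3 : -(1 / μ) = -((1 - μ) / μ) - 1 := by field_simp; ring
    rw [e, Real.div_rpow h1.le h0.le]
    unfold ΦED
    rw [e3, Real.rpow_sub_one h0.ne', Real.rpow_neg h0.le]
    have := (Real.rpow_pos_of_pos h0 ((1 - μ) / μ)).ne'
    field_simp
  have hlim0 : Tendsto (ΦED γ μ K) atTop (𝓝 0) := by
    have := hmulK.div_atTop (tendsto_id (α := ℝ) (x := atTop))
    refine this.congr' ?_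
    filter_upwards [eventually_gt_atTop 0] with U hU
    simp only [id]
    field_simp
  have hyD : ΦED γ μ K (UD γ) = yD γ μ K := rfl
  refine ⟨hyD ▸ hneg _ le_rfl, fun U hU => hneg U (le_of_lt hU),
    fun U hU => (hder U (le_of_lt hU)).differentiableAt, ?_,
    hmono.mono Ioi_subset_Ici_self, ?_, hlim0, ⟨?_, ?_, ?_⟩, hmulK⟩
  · intro U hU
    rw [(hder U (le_of_lt hU)).deriv]
    exact div_mul_cancel₀ _ (hgneg U (le_of_lt hU)).ne
  · exact hyD ▸ (hder _ le_rfl).continuousAt.tendsto.mono_left nhdsWithin_le_nhds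
  · intro U hU
    exact ⟨hyD ▸ hmono self_mem_Ici (Ioi_subset_Ici_self hU) hU, hneg U (le_of_lt hU)⟩
  · exact (hmono.mono Ioi_subset_Ici_self).injOn
  · rintro y ⟨hy1, hy2⟩
    obtain ⟨N, hN1, hN2⟩ :=
      ((hlim0.eventually (lt_mem_nhds hy2)).and (eventually_gt_atTop (UD γ))).exists
    have := intermediate_value_Ioo hN2.le (hcont.mono Icc_subset_Ici_self)
    obtain ⟨U, hU, hUy⟩ := this ⟨hy1, hN1⟩
    exact ⟨U, hU.1, hUy⟩
end

section
/- The point D satisfies F(H_D,U_D) = 0, G(H_D,U_D) = 0 and Δ(H_D,U_D) = 0, and the slope quadratic at D has exactly two roots, namely C₁ = (γ−1)²/(3−γ) and C₂ = (γ−1)·(−(γ−3)²μ + γ²−2γ+5)/(2(3−γ)·((γ−3)μ+2)); these two roots satisfy C₂ > C₁ > 0. -/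
noncomputable def HD (γ : ℝ) : ℝ := ((γ - 1) / (3 - γ)) ^ 2

/-- `D` is a triple point (`F = G = Δ = 0`), and the slope quadratic at `D`
has exactly the two roots `C₁` and `C₂`, with `C₂ > C₁ > 0`. -/
theorem stmt8 (γ μ : ℝ) (hγ1 : 1 < γ) (hγ3 : γ < 3) (hμ0 : 0 < μ) (hμ1 : μ < 1) :
    F γ μ (HD γ) (UD γ) = 0 ∧ G γ μ (HD γ) (UD γ) = 0 ∧ Dlt (HD γ) (UD γ) = 0 ∧
    (∀ lam : ℝ,
      GH γ μ (UD γ) (HD γ) * lam ^ 2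
        - (FH γ μ (UD γ) (HD γ) - GU γ μ (UD γ) (HD γ)) * lam
        - FU γ μ (UD γ) (HD γ) = 0 ↔
      (lam = (γ - 1) ^ 2 / (3 - γ) ∨
       lam = (γ - 1) * (-(γ - 3) ^ 2 * μ + γ ^ 2 - 2 * γ + 5)
              / (2 * (3 - γ) * ((γ - 3) * μ + 2)))) ∧
    (γ - 1) ^ 2 / (3 - γ)
      < (γ - 1) * (-(γ - 3) ^ 2 * μ + γ ^ 2 - 2 * γ + 5)
          / (2 * (3 - γ) * ((γ - 3) * μ + 2)) ∧
    0 < (γ - 1) ^ 2 / (3 - γ) := by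
  have h1 : γ - 1 ≠ 0 := by linarith
  have h3 : 3 - γ ≠ 0 := by linarith
  have p1 : 0 < γ - 1 := by linarith
  have p3 : 0 < 3 - γ := by linarith
  have pq : 0 < (γ - 3) * μ + 2 := by nlinarith
  have hq : (γ - 3) * μ + 2 ≠ 0 := pq.ne'
  have hq2 : μ * (γ - 3) + 2 ≠ 0 := by rw [mul_comm]; exact hq
  refine ⟨?_, ?_, ?_, ?_, ?_, by positivity⟩
  · unfold F k₁ HD UD
    field_simp
    ring
  · unfold G k₂ HD UD
    field_simp
    ring
  · unfold Dlt HD UD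
    field_simp
    ring
  · intro lam
    have key : GH γ μ (UD γ) (HD γ) * lam ^ 2
        - (FH γ μ (UD γ) (HD γ) - GU γ μ (UD γ) (HD γ)) * lam
        - FU γ μ (UD γ) (HD γ) =
        (2 * ((γ - 3) * μ + 2) / ((3 - γ) * (γ - 1))) *
        ((lam - (γ - 1) ^ 2 / (3 - γ)) *
         (lam - (γ - 1) * (-(γ - 3) ^ 2 * μ + γ ^ 2 - 2 * γ + 5)
              / (2 * (3 - γ) * ((γ - 3) * μ + 2)))) := by
      unfold GH FH GU FU k₁ k₂ HD UD
      field_simp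
      ring
    have hc : 2 * ((γ - 3) * μ + 2) / ((3 - γ) * (γ - 1)) ≠ 0 := by positivity
    rw [key, mul_eq_zero, mul_eq_zero, sub_eq_zero, sub_eq_zero]
    simp only [hc, false_or]
  · rw [← sub_pos]
    have key : (γ - 1) * (-(γ - 3) ^ 2 * μ + γ ^ 2 - 2 * γ + 5)
          / (2 * (3 - γ) * ((γ - 3) * μ + 2)) - (γ - 1) ^ 2 / (3 - γ)
        = (γ - 1) * ((3 - γ) * (1 - μ) + 2 * (γ - 1) * μ) / (2 * ((γ - 3) * μ + 2)) := by
      field_simp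
      ring
    have pm : 0 < 1 - μ := by linarith
    rw [key]
    positivity
end

section
/- Let ℳ be the 2×2 real matrix with first row (F_H(U_D,H_D), F_U(U_D,H_D)) and second row (G_H(U_D,H_D), G_U(U_D,H_D)), and set λ₁ = 2(γ−1)(μ−1)/(3−γ), λ₂ = ((3−γ)μ − γ − 1)/(3−γ), C₁ = (γ−1)²/(3−γ), C₂ = (γ−1)·(−(γ−3)²μ + γ²−2γ+5)/(2(3−γ)·((γ−3)μ+2)). Then ℳ·(C₂,1)ᵀ = λ₁·(C₂,1)ᵀ and ℳ·(C₁,1)ᵀ = λ₂·(C₁,1)ᵀ, i.e. λ₁ and λ₂ are eigenvalues of ℳ with eigenvectors (C₂,1)ᵀ and (C₁,1)ᵀ respectively, and moreover λ₂ < λ₁ < 0. -/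
/-- The Jacobian matrix `ℳ` of `(F,G)` in `(H,U)` at the point `D`. -/
noncomputable def MatD (γ μ : ℝ) : Matrix (Fin 2) (Fin 2) ℝ :=
  !![FH γ μ (UD γ) (HD γ), FU γ μ (UD γ) (HD γ);
     GH γ μ (UD γ) (HD γ), GU γ μ (UD γ) (HD γ)]
noncomputable def lam₁ (γ μ : ℝ) : ℝ := 2 * (γ - 1) * (μ - 1) / (3 - γ)
noncomputable def lam₂ (γ μ : ℝ) : ℝ := ((3 - γ) * μ - γ - 1) / (3 - γ)
noncomputable def C₁D (γ : ℝ) : ℝ := (γ - 1) ^ 2 / (3 - γ)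
noncomputable def C₂D (γ μ : ℝ) : ℝ :=
  (γ - 1) * (-(γ - 3) ^ 2 * μ + γ ^ 2 - 2 * γ + 5) / (2 * (3 - γ) * ((γ - 3) * μ + 2))

/-- `λ₁, λ₂` are eigenvalues of `ℳ` with eigenvectors `(C₂,1)ᵀ`, `(C₁,1)ᵀ`,
and `λ₂ < λ₁ < 0`. -/
theorem stmt9 (γ μ : ℝ) (hγ1 : 1 < γ) (hγ3 : γ < 3) (hμ0 : 0 < μ) (hμ1 : μ < 1) :
    (MatD γ μ).mulVec ![C₂D γ μ, 1] = lam₁ γ μ • ![C₂D γ μ, 1] ∧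
    (MatD γ μ).mulVec ![C₁D γ, 1] = lam₂ γ μ • ![C₁D γ, 1] ∧
    lam₂ γ μ < lam₁ γ μ ∧ lam₁ γ μ < 0 := by
  have h3 : 3 - γ ≠ 0 := by linarith
  have h1 : γ - 1 ≠ 0 := by linarith
  have hp : (γ - 3) * μ + 2 ≠ 0 := by
    have : 0 < (γ - 3) * μ + 2 := by nlinarith
    exact this.ne'
  have hp2 : μ * (γ - 3) + 2 ≠ 0 := by rwa [mul_comm]
  have hpos : 0 < 3 - γ := by linarith
  refine ⟨?_, ?_, ?_, ?_⟩
  · ext i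
    fin_cases i
    · simp [MatD, Matrix.mulVec, dotProduct, Fin.sum_univ_two, FH, FU, k₁, UD, HD, lam₁, C₂D]
      field_simp
      ring
    · simp [MatD, Matrix.mulVec, dotProduct, Fin.sum_univ_two, GH, GU, k₂, UD, HD, lam₁, C₂D]
      field_simp
      ring
  · ext i
    fin_cases i
    · simp [MatD, Matrix.mulVec, dotProduct, Fin.sum_univ_two, FH, FU, k₁, UD, HD, lam₂, C₁D]
      field_simp
      ring
    · simp [MatD, Matrix.mulVec, dotProduct, Fin.sum_univ_two, GH, GU, k₂, UD, HD, lam₂, C₁D]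
      field_simp
      ring
  · unfold lam₁ lam₂
    rw [div_lt_div_iff_of_pos_right hpos]
    nlinarith [mul_pos hμ0 (sub_pos.2 hγ1), mul_pos (sub_pos.2 hμ1) hpos]
  · unfold lam₁
    apply div_neg_of_neg_of_pos _ hpos
    nlinarith [mul_pos (sub_pos.2 hγ1) (sub_pos.2 hμ1)]
end

section
/- With U_D = 2/(3−γ), C₁ = (γ−1)²/(3−γ) and C₂ = (γ−1)·(−(γ−3)²μ + γ²−2γ+5)/(2(3−γ)·((γ−3)μ+2)), the inequalities 2(U_D − 1) − C₁ > 0 and 2(U_D − 1) − C₂ > 0 hold; that is, both slope roots at the sonic point D are strictly less than 2(U_D − 1) = 2(γ−1)/(3−γ). -/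
/-- `2(U_D - 1) - C₁ > 0` and `2(U_D - 1) - C₂ > 0`, i.e. both slope roots
at the sonic point `D` are strictly less than `2(U_D - 1) = 2(γ-1)/(3-γ)`. -/
theorem stmt10 (γ μ : ℝ) (hγ1 : 1 < γ) (hγ3 : γ < 3) (hμ0 : 0 < μ) (hμ1 : μ < 1) :
    0 < 2 * (UD γ - 1) - C₁D γ ∧ 0 < 2 * (UD γ - 1) - C₂D γ μ ∧
    C₁D γ < 2 * (γ - 1) / (3 - γ) ∧ C₂D γ μ < 2 * (γ - 1) / (3 - γ) := by
  have ha : 0 < 3 - γ := by linarith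
  have hD : 0 < (γ - 3) * μ + 2 := by nlinarith
  have hU : 2 * (UD γ - 1) = 2 * (γ - 1) / (3 - γ) := by
    unfold UD
    field_simp
    ring
  have h1 : C₁D γ < 2 * (γ - 1) / (3 - γ) := by
    unfold C₁D
    apply div_lt_div_of_pos_right _ ha
    nlinarith
  have h2 : C₂D γ μ < 2 * (γ - 1) / (3 - γ) := by
    have hk : 0 < ((3 - γ) * (γ + 1)) * (1 - μ) :=
      mul_pos (mul_pos ha (by linarith)) (by linarith)
    have hN : -(γ - 3) ^ 2 * μ + γ ^ 2 - 2 * γ + 5 < 4 * ((γ - 3) * μ + 2) := by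
      nlinarith
    have hE : 2 * (γ - 1) / (3 - γ)
        = (γ - 1) * (4 * ((γ - 3) * μ + 2)) / (2 * (3 - γ) * ((γ - 3) * μ + 2)) := by
      rw [div_eq_div_iff ha.ne' (by positivity)]
      ring
    rw [hE]
    unfold C₂D
    apply div_lt_div_of_pos_right _ (by positivity)
    exact mul_lt_mul_of_pos_left hN (by linarith)
  refine ⟨?_, ?_, h1, h2⟩ <;> rw [hU] <;> linarith
end

section
/- With U_D = 2/(3−γ), H_D = ((γ−1)/(3−γ))² and C₂ = (γ−1)·(−(γ−3)²μ + γ²−2γ+5)/(2(3−γ)·((γ−3)μ+2)), the following two algebraic identities hold: (G_H(U_D,H_D)·C₂ + G_U(U_D,H_D))/(2(U_D−1) − C₂) = −(8 + 4(γ−3)μ)/((3−γ)(γ+1)), and C₂·(−(8 + 4(γ−3)μ)/((3−γ)(γ+1))) = 2(γ−1)·((3−γ)²μ − (γ²−2γ+5))/((3−γ)²(γ+1)). (These give the values of y_D·U'(y_D) and y_D·H'(y_D) for solution curves approaching D along the slope C₂.) -/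
/-- the two algebraic identities giving the values of `y_D U'(y_D)` and
`y_D H'(y_D)` for solution curves approaching `D` along the slope `C₂`. -/
theorem stmt11 (γ μ : ℝ) (hγ1 : 1 < γ) (hγ3 : γ < 3) (hμ0 : 0 < μ) (hμ1 : μ < 1) :
    (GH γ μ (UD γ) (HD γ) * C₂D γ μ + GU γ μ (UD γ) (HD γ))
        / (2 * (UD γ - 1) - C₂D γ μ)
      = -(8 + 4 * (γ - 3) * μ) / ((3 - γ) * (γ + 1)) ∧
    C₂D γ μ * (-(8 + 4 * (γ - 3) * μ) / ((3 - γ) * (γ + 1)))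
      = 2 * (γ - 1) * ((3 - γ) ^ 2 * μ - (γ ^ 2 - 2 * γ + 5))
          / ((3 - γ) ^ 2 * (γ + 1)) := by
  have h1 : γ - 1 ≠ 0 := (by linarith : 0 < γ - 1).ne'
  have h3 : 3 - γ ≠ 0 := (by linarith : 0 < 3 - γ).ne'
  have hp : γ + 1 ≠ 0 := (by linarith : 0 < γ + 1).ne'
  have hm : 1 - μ ≠ 0 := (by linarith : 0 < 1 - μ).ne'
  have hD : (γ - 3) * μ + 2 ≠ 0 := by
    have : 0 < (γ - 3) * μ + 2 := by nlinarith
    exact this.ne'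
  have hden : 2 * (UD γ - 1) - C₂D γ μ
      = (γ - 1) * (γ + 1) * (1 - μ) / (2 * ((γ - 3) * μ + 2)) := by
    unfold UD C₂D
    field_simp
    ring
  constructor
  · rw [hden]
    have hne : (γ - 1) * (γ + 1) * (1 - μ) / (2 * ((γ - 3) * μ + 2)) ≠ 0 := by
      positivity
    rw [div_eq_iff hne]
    have hD' : μ * (γ - 3) + 2 ≠ 0 := by rwa [mul_comm]
    have hR : -(8 + 4 * (γ - 3) * μ) / ((3 - γ) * (γ + 1))
        * ((γ - 1) * (γ + 1) * (1 - μ) / (2 * ((γ - 3) * μ + 2)))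
        = -(2 * (γ - 1) * (1 - μ)) / (3 - γ) := by
      field_simp
      ring
    rw [hR]
    unfold GH GU UD HD C₂D k₂
    field_simp
    ring
  · unfold C₂D
    field_simp
    ring
end

section
/- Let c = γ(1−μ)/(1+k₂). Then the following two limits hold as U → 1 with U ≠ 1: lim F(c(U−1), U)/Δ(c(U−1), U) = (γ−1)(μ−1), and lim G(c(U−1), U)/Δ(c(U−1), U) = (1−γ)(1+k₂)/γ. (These give the values of dH/dz and dU/dz at the point B = (1,0) for the solution curve leaving B with slope c, where z = ln(−y).) -/
open Filter Topology

/-- with `c = γ(1-μ)/(1+k₂)`, along `H = c(U-1)` one has, as `U → 1`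
with `U ≠ 1`, `F/Δ → (γ-1)(μ-1)` and `G/Δ → (1-γ)(1+k₂)/γ`. -/
theorem stmt14 (γ μ : ℝ) (hγ1 : 1 < γ) (hγ3 : γ < 3) (hμ0 : 0 < μ) (hμ1 : μ < 1) :
    Tendsto (fun U : ℝ =>
        F γ μ (γ * (1 - μ) / (1 + k₂ γ μ) * (U - 1)) U
          / Dlt (γ * (1 - μ) / (1 + k₂ γ μ) * (U - 1)) U)
      (𝓝[≠] (1 : ℝ)) (𝓝 ((γ - 1) * (μ - 1))) ∧
    Tendsto (fun U : ℝ =>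
        G γ μ (γ * (1 - μ) / (1 + k₂ γ μ) * (U - 1)) U
          / Dlt (γ * (1 - μ) / (1 + k₂ γ μ) * (U - 1)) U)
      (𝓝[≠] (1 : ℝ)) (𝓝 ((1 - γ) * (1 + k₂ γ μ) / γ)) := by
  have hk : 0 < 1 + k₂ γ μ := by
    have : 0 < k₂ γ μ := div_pos (by linarith) (by linarith)
    linarith
  have h1μ : 0 < 1 - μ := by linarith
  have hγ : 0 < γ := by linarith
  have hc : 0 < γ * (1 - μ) / (1 + k₂ γ μ) := by positivity
  have hck : γ * (1 - μ) / (1 + k₂ γ μ) * (1 + k₂ γ μ) = γ * (1 - μ) :=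
    div_mul_cancel₀ _ hk.ne'
  generalize γ * (1 - μ) / (1 + k₂ γ μ) = c at hc hck ⊢
  have key : ∀ (f p : ℝ → ℝ) (L : ℝ), Continuous p → (∀ U, f U = (U - 1) * p U) →
      p 1 / (-c) = L →
      Tendsto (fun U : ℝ => f U / Dlt (c * (U - 1)) U) (𝓝[≠] (1 : ℝ)) (𝓝 L) := by
    intro f p L hp hf hL
    have hd : Tendsto (fun U : ℝ => (U - 1) - c) (𝓝 1) (𝓝 (-c)) := by
      have h : Continuous (fun U : ℝ => (U - 1) - c) := by fun_prop
      simpa using h.tendsto 1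
    have h2 := ((hp.tendsto 1).div hd (by linarith [hc] : -c < 0).ne).mono_left
      (nhdsWithin_le_nhds (s := {1}ᶜ))
    rw [hL] at h2
    refine h2.congr' ?_
    filter_upwards [self_mem_nhdsWithin] with U hU
    have hU' : U - 1 ≠ 0 := sub_ne_zero.mpr hU
    have hD : Dlt (c * (U - 1)) U = (U - 1) * ((U - 1) - c) := by
      unfold Dlt; ring
    rw [hf, hD, mul_div_mul_left _ _ hU']
    rfl
  constructor
  · refine key _ (fun U => 2 * c * (c * (U - 1) - (U ^ 2 - k₁ γ μ * U + μ))) _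
      (by fun_prop) (fun U => by unfold F; ring) ?_
    unfold k₁
    field_simp
    ring
  · refine key _ (fun U => c * (U + k₂ γ μ) - U * (U - μ)) _
      (by fun_prop) (fun U => by unfold G; ring) ?_
    rw [div_eq_div_iff (by linarith [hc] : -c < 0).ne hγ.ne']
    linear_combination (γ + (1 - γ)) * hck + (γ - 1) * hck - (γ - 1) * hck
end

section
/- There exists a continuous function H : [1, U_D] → ℝ, differentiable on the open interval (1, U_D), such that: H(1) = 0; H(U_D) = H_D = ((γ−1)/(3−γ))²; for every U ∈ (1, U_D), H_G(U) < H(U) < ((γ−1)²/4)·U² (so the integral curve lies strictly between the lower barrier G = 0 and the upper barrier given by the special solution); H'(U)·G(H(U),U) = F(H(U),U) for every U ∈ (1, U_D); and lim_{U→1⁺} H(U)/(U−1) = γ(1−μ)/(1+k₂). In other words, there exists an integral curve of dH/dU = F/G connecting the point B = (1,0), which it leaves with slope γ(1−μ)/(1+k₂), to the point D = (U_D, H_D). -/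
open Set Filter Topology

/-- The curve `G = 0` solved for `H`. -/
noncomputable def HG (γ μ U : ℝ) : ℝ := U * (U - 1) * (U - μ) / (U + k₂ γ μ)

lemma clamp_lip (lo hi x y : ℝ) : |max lo (min x hi) - max lo (min y hi)| ≤ |x - y| := by
  refine (abs_max_sub_max_le_max _ _ _ _).trans ?_
  rw [sub_self, abs_zero]
  refine max_le (abs_nonneg _) ((abs_min_sub_min_le_max _ _ _ _).trans ?_)
  rw [sub_self, abs_zero]
  exact max_le le_rfl (abs_nonneg _)

lemma clamp_mem (lo hi x : ℝ) (h : lo ≤ hi) : max lo (min x hi) ∈ Icc lo hi :=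
  ⟨le_max_left _ _, max_le h (min_le_right _ _)⟩

lemma clamp_eq (lo hi x : ℝ) (h : x ∈ Icc lo hi) : max lo (min x hi) = x := by
  rw [min_eq_left h.2, max_eq_right h.1]

lemma sing_core (Φ : ℝ × ℝ → ℝ) (s lam r δ : ℝ) (hlam : 0 < lam) (hr : 0 < r) (hδ : 0 < δ)
    (hc : ContinuousOn Φ (Icc 0 δ ×ˢ Icc (s - r) (s + r)))
    (hL : ∀ V ∈ Icc 0 δ, ∀ x ∈ Icc (s - r) (s + r), ∀ y ∈ Icc (s - r) (s + r),
      |Φ (V, x) - Φ (V, y) + lam * (x - y)| ≤ lam / 2 * |x - y|)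
    (hb : ∀ V ∈ Icc 0 δ, |Φ (V, s)| ≤ lam / 2 * r) (h0 : Φ (0, s) = 0) :
    ∃ w : ℝ → ℝ, Continuous w ∧ w 0 = s ∧ (∀ V, w V ∈ Icc (s - r) (s + r)) ∧
      ∀ V ∈ Ioo 0 δ, HasDerivAt w (Φ (V, w V) / V) V := by
  obtain ⟨m, hm⟩ := exists_nat_ge lam
  set N : ℝ := (m : ℝ) + 1 with hN
  have hNpos : 0 < N := by positivity
  have hNlam : lam ≤ N := by linarith
  set Ψ : ℝ → ℝ → ℝ := fun V x =>
    Φ (max 0 (min V δ), max (s - r) (min x (s + r))) + N * max (s - r) (min x (s + r)) with hΨ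
  have hsr : s - r ≤ s + r := by linarith
  have hΨc : Continuous (fun p : ℝ × ℝ => Ψ p.1 p.2) := by
    have h1 : Continuous (fun p : ℝ × ℝ =>
        Φ (max 0 (min p.1 δ), max (s - r) (min p.2 (s + r)))) := by
      refine hc.comp_continuous (by fun_prop) ?_
      intro p
      exact ⟨clamp_mem _ _ _ hδ.le, clamp_mem _ _ _ hsr⟩
    simp only [hΨ]
    exact h1.add (by fun_prop)
  have hΨL : ∀ V x y, |Ψ V x - Ψ V y| ≤ (N - lam / 2) * |x - y| := by
    intro V x y
    have h1 := hL _ (clamp_mem 0 δ V hδ.le) _ (clamp_mem _ _ x hsr) _ (clamp_mem _ _ y hsr)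
    have h2 := clamp_lip (s - r) (s + r) x y
    simp only [hΨ]
    set X := max (s - r) (min x (s + r))
    set Y := max (s - r) (min y (s + r))
    set W := max 0 (min V δ)
    have h3 : Φ (W, X) + N * X - (Φ (W, Y) + N * Y)
      = (Φ (W, X) - Φ (W, Y) + lam * (X - Y)) + (N - lam) * (X - Y) := by ring
    rw [h3]
    refine (abs_add_le _ _).trans ?_
    rw [abs_mul, abs_of_nonneg (by linarith : 0 ≤ N - lam)]
    nlinarith
  have hΨs : ∀ V, |Ψ V s - N * s| ≤ lam / 2 * r := by
    intro V
    have h1 := hb _ (clamp_mem 0 δ V hδ.le)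
    simp only [hΨ]
    rw [clamp_eq (s - r) (s + r) s ⟨by linarith, by linarith⟩]
    simpa using h1
  have hΨN : ∀ V x, |Ψ V x - N * s| ≤ N * r := by
    intro V x
    have e : Ψ V x = Ψ V (max (s - r) (min x (s + r))) := by
      simp only [hΨ]
      rw [clamp_eq _ _ _ (clamp_mem (s - r) (s + r) x hsr)]
    have h1 := hΨL V (max (s - r) (min x (s + r))) s
    have h2 := hΨs V
    rw [← e] at h1
    have h3 : |max (s - r) (min x (s + r)) - s| ≤ r := by
      have := clamp_mem (s - r) (s + r) x hsr
      rw [abs_le]; constructor <;> linarith [this.1, this.2]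
    have h4 : Ψ V x - N * s = (Ψ V x - Ψ V s) + (Ψ V s - N * s) := by ring
    rw [h4]
    refine (abs_add_le _ _).trans ?_
    nlinarith
  have hpowint : ∫ σ in (0:ℝ)..1, σ ^ m = 1 / N := by
    rw [integral_pow]; simp [hN]
  have hcont : ∀ w : ℝ → ℝ, Continuous w →
      Continuous (fun p : ℝ × ℝ => p.2 ^ m * Ψ (p.2 * p.1) (w (p.2 * p.1))) := by
    intro w hw
    have := hΨc.comp (by fun_prop : Continuous (fun p : ℝ × ℝ => (p.2 * p.1, w (p.2 * p.1))))
    simp only [Function.comp_def] at this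
    fun_prop
  set T0 : (ℝ → ℝ) → ℝ → ℝ := fun w V => ∫ σ in (0:ℝ)..1, σ ^ m * Ψ (σ * V) (w (σ * V)) with hT0
  have hσc : ∀ w : ℝ → ℝ, Continuous w → ∀ V,
      Continuous (fun σ : ℝ => σ ^ m * Ψ (σ * V) (w (σ * V))) := by
    intro w hw V
    exact (hcont w hw).comp (by fun_prop : Continuous (fun σ : ℝ => (V, σ)))
  have hT0c : ∀ w, Continuous w → Continuous (T0 w) := by
    intro w hw
    exact intervalIntegral.continuous_parametric_intervalIntegral_of_continuous'
      (f := fun V σ => σ ^ m * Ψ (σ * V) (w (σ * V))) (hcont w hw) 0 1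
  have hest : ∀ (g : ℝ → ℝ) (C : ℝ), (∀ σ, |g σ| ≤ C) →
      |∫ σ in (0:ℝ)..1, σ ^ m * g σ| ≤ C / N := by
    intro g C hg
    have : ‖∫ σ in (0:ℝ)..1, σ ^ m * g σ‖ ≤ ∫ σ in (0:ℝ)..1, σ ^ m * C := by
      refine intervalIntegral.norm_integral_le_of_norm_le zero_le_one ?_ ?_
      · refine Eventually.of_forall ?_
        intro σ hσ
        rw [norm_mul, Real.norm_eq_abs, Real.norm_eq_abs, abs_of_nonneg (pow_nonneg hσ.1.le m)]
        exact mul_le_mul_of_nonneg_left (hg σ) (pow_nonneg hσ.1.le m)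
      · exact Continuous.intervalIntegrable (by fun_prop) _ _
    rw [intervalIntegral.integral_mul_const, hpowint] at this
    rw [← Real.norm_eq_abs]
    refine this.trans (le_of_eq ?_)
    ring
  have hT0b : ∀ w, Continuous w → ∀ V, |T0 w V - s| ≤ r := by
    intro w hw V
    have h1 := hest (fun σ => Ψ (σ * V) (w (σ * V)) - N * s) (N * r) (fun σ => hΨN _ _)
    have h2 : ∫ σ in (0:ℝ)..1, σ ^ m * (Ψ (σ * V) (w (σ * V)) - N * s) = T0 w V - s := by
      have h3 : ∀ σ : ℝ, σ ^ m * (Ψ (σ * V) (w (σ * V)) - N * s)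
        = σ ^ m * Ψ (σ * V) (w (σ * V)) - σ ^ m * (N * s) := fun σ => by ring
      simp only [h3]
      rw [intervalIntegral.integral_sub ((hσc w hw V).intervalIntegrable _ _)
        (Continuous.intervalIntegrable (by fun_prop) _ _),
        intervalIntegral.integral_mul_const, hpowint]
      field_simp
      rfl
    rw [h2] at h1
    refine h1.trans (le_of_eq ?_)
    field_simp
  let T : BoundedContinuousFunction ℝ ℝ → BoundedContinuousFunction ℝ ℝ := fun w =>
    BoundedContinuousFunction.ofNormedAddCommGroup (T0 w) (hT0c w w.continuous) (|s| + r) (by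
      intro V
      have := hT0b w w.continuous V
      rw [Real.norm_eq_abs]
      have h2 := abs_add_le (T0 w V - s) s
      rw [sub_add_cancel] at h2
      linarith)
  have hTapp : ∀ w V, T w V = T0 w V := fun w V => rfl
  have hq0 : 0 ≤ (N - lam / 2) / N := div_nonneg (by linarith) hNpos.le
  have hTc : ContractingWith (Real.toNNReal ((N - lam / 2) / N)) T := by
    constructor
    · rw [Real.toNNReal_lt_one, div_lt_one hNpos]
      linarith
    · refine LipschitzWith.of_dist_le_mul ?_
      intro u v
      rw [Real.coe_toNNReal _ hq0]
      rw [BoundedContinuousFunction.dist_le (mul_nonneg hq0 dist_nonneg)]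
      intro V
      rw [hTapp, hTapp, Real.dist_eq]
      have h1 := hest (fun σ => Ψ (σ * V) (u (σ * V)) - Ψ (σ * V) (v (σ * V)))
        ((N - lam / 2) * dist u v) (fun σ => by
          refine (hΨL _ _ _).trans ?_
          refine mul_le_mul_of_nonneg_left ?_ (by linarith)
          rw [← Real.dist_eq]
          exact BoundedContinuousFunction.dist_coe_le_dist _)
      have h2 : ∫ σ in (0:ℝ)..1, σ ^ m * (Ψ (σ * V) (u (σ * V)) - Ψ (σ * V) (v (σ * V)))
          = T0 u V - T0 v V := by
        simp only [mul_sub]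
        rw [intervalIntegral.integral_sub ((hσc u u.continuous V).intervalIntegrable _ _)
          ((hσc v v.continuous V).intervalIntegrable _ _)]
      rw [h2] at h1
      refine h1.trans (le_of_eq ?_)
      ring
  set w := ContractingWith.fixedPoint T hTc with hw
  have hfix : T w = w := ContractingWith.fixedPoint_isFixedPt hTc
  have hwV : ∀ V, w V = T0 w V := by
    intro V
    rw [← hTapp, hfix]
  have hwmem : ∀ V, w V ∈ Icc (s - r) (s + r) := by
    intro V
    have := hT0b w w.continuous V
    rw [← hwV, abs_le] at this
    constructor <;> linarith [this.1, this.2]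
  have hΨeq : ∀ V ∈ Icc 0 δ, Ψ V (w V) = Φ (V, w V) + N * w V := by
    intro V hV
    simp only [hΨ]
    rw [clamp_eq _ _ _ hV, clamp_eq _ _ _ (hwmem V)]
  refine ⟨w, w.continuous, ?_, hwmem, ?_⟩
  · have h1 := hwV 0
    simp only [hT0, mul_zero] at h1
    rw [intervalIntegral.integral_mul_const, hpowint, hΨeq 0 ⟨le_rfl, hδ.le⟩] at h1
    have h2 : Φ (0, w 0) = 0 := by
      field_simp at h1
      linarith
    have h3 := hL 0 ⟨le_rfl, hδ.le⟩ _ (hwmem 0) s ⟨by linarith, by linarith⟩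
    rw [h2, h0, sub_zero, zero_add, abs_mul, abs_of_pos hlam] at h3
    have h4 : |w 0 - s| ≤ 0 := by nlinarith [abs_nonneg (w 0 - s)]
    have := abs_nonpos_iff.mp h4
    linarith
  · intro V hV
    set g : ℝ → ℝ := fun τ => τ ^ m * Ψ τ (w τ) with hg
    have hgc : Continuous g := by
      have := hΨc.comp (by fun_prop : Continuous (fun p : ℝ => (p, w p)))
      simp only [Function.comp_def] at this
      fun_prop
    have hrep : ∀ v, 0 < v → w v = (∫ τ in (0:ℝ)..v, g τ) / v ^ (m + 1) := by
      intro v hv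
      rw [hwV v]
      simp only [hT0]
      have h1 := intervalIntegral.integral_comp_mul_right (a := 0) (b := 1) g hv.ne'
      rw [zero_mul, one_mul] at h1
      rw [eq_div_iff (by positivity)]
      have h2 : ∀ σ : ℝ, g (σ * v) = v ^ m * (σ ^ m * Ψ (σ * v) (w (σ * v))) := by
        intro σ; simp only [hg]; rw [mul_pow]; ring
      simp only [h2] at h1
      rw [intervalIntegral.integral_const_mul] at h1
      rw [pow_succ, ← mul_assoc, mul_comm _ (v ^ m), h1, smul_eq_mul]
      field_simp
    have hd1 : HasDerivAt (fun v => ∫ τ in (0:ℝ)..v, g τ) (g V) V :=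
      intervalIntegral.integral_hasDerivAt_right (hgc.intervalIntegrable _ _)
        (hgc.stronglyMeasurableAtFilter _ _) hgc.continuousAt
    have hd2 := hd1.div (hasDerivAt_pow (m + 1) V) (pow_ne_zero _ hV.1.ne')
    have hd3 : HasDerivAt w _ V := hd2.congr_of_eventuallyEq (by
      filter_upwards [lt_mem_nhds hV.1] with v hv
      exact hrep v hv)
    convert hd3 using 1
    have hI : (∫ τ in (0:ℝ)..V, g τ) = w V * V ^ (m + 1) := by
      rw [hrep V hV.1]
      have := hV.1.ne'
      field_simp
    rw [hI]
    simp only [hg]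
    rw [hΨeq V ⟨hV.1.le, hV.2.le⟩]
    have := hV.1.ne'
    simp only [Nat.add_sub_cancel, Nat.cast_add, Nat.cast_one]
    rw [← hN]
    field_simp
    ring

lemma sing_ode (Φ : ℝ × ℝ → ℝ) (s lam : ℝ) (hlam : 0 < lam) (L : ℝ × ℝ →L[ℝ] ℝ)
    (hs : HasStrictFDerivAt Φ L (0, s)) (hL : L (0, 1) = -lam) (h0 : Φ (0, s) = 0)
    (hc : ∀ᶠ x in 𝓝 ((0 : ℝ), s), ContinuousAt Φ x) :
    ∃ δ > 0, ∃ w : ℝ → ℝ, Continuous w ∧ w 0 = s ∧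
      ∀ V ∈ Ioo 0 δ, HasDerivAt w (Φ (V, w V) / V) V := by
  have h1 := hs.isLittleO.def (half_pos hlam)
  rw [Metric.eventually_nhds_iff] at h1 hc
  obtain ⟨e1, he1, H1⟩ := h1
  obtain ⟨e2, he2, H2⟩ := hc
  set r := min e1 e2 / 2 with hr
  have hr0 : 0 < r := by positivity
  have hre1 : r < e1 := by have := min_le_left e1 e2; have : 0 < min e1 e2 := by positivity
                           linarith
  have hre2 : r < e2 := by have := min_le_right e1 e2; have : 0 < min e1 e2 := by positivity
                           linarith
  have h3 : ContinuousAt (fun V : ℝ => Φ (V, s)) 0 := by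
    have : ContinuousAt Φ (0, s) := hs.continuousAt
    exact ContinuousAt.comp (f := fun V : ℝ => (V, s)) (g := Φ) this (by fun_prop)
  rw [Metric.continuousAt_iff] at h3
  obtain ⟨e3, he3, H3⟩ := h3 (lam / 2 * r) (by positivity)
  have hmem : ∀ V x, |V| ≤ r → |x - s| ≤ r → dist (V, x) ((0 : ℝ), s) ≤ r := by
    intro V x hV hx
    rw [Prod.dist_eq]
    simp only [Real.dist_eq, sub_zero]
    exact max_le hV hx
  set δ := min r (e3 / 2) with hδ
  have hδ0 : 0 < δ := by positivity
  have hVr : ∀ V ∈ Icc 0 δ, |V| ≤ r := fun V hV => by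
    rw [abs_of_nonneg hV.1]; exact hV.2.trans (min_le_left _ _)
  have hxr : ∀ x ∈ Icc (s - r) (s + r), |x - s| ≤ r := fun x hx => by
    rw [abs_le]; constructor <;> linarith [hx.1, hx.2]
  suffices h : ∃ w : ℝ → ℝ, Continuous w ∧ w 0 = s ∧ (∀ V, w V ∈ Icc (s - r) (s + r)) ∧
      ∀ V ∈ Ioo 0 δ, HasDerivAt w (Φ (V, w V) / V) V by
    obtain ⟨w, hw1, hw2, -, hw3⟩ := h
    exact ⟨δ, hδ0, w, hw1, hw2, hw3⟩
  refine sing_core Φ s lam r δ hlam hr0 hδ0 ?_ ?_ ?_ h0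
  · rintro ⟨V, x⟩ ⟨hV, hx⟩
    exact (H2 ((hmem V x (hVr V hV) (hxr x hx)).trans_lt hre2)).continuousWithinAt
  · intro V hV x hx y hy
    have := @H1 ((V, x), (V, y)) (by
      rw [Prod.dist_eq]
      exact max_lt ((hmem V x (hVr V hV) (hxr x hx)).trans_lt hre1)
        ((hmem V y (hVr V hV) (hxr y hy)).trans_lt hre1))
    simp only [Prod.mk_sub_mk, sub_self] at this
    have e : ((0 : ℝ), x - y) = (x - y) • ((0 : ℝ), (1 : ℝ)) := by simp
    have hn : ‖((0 : ℝ), x - y)‖ = |x - y| := by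
      rw [Prod.norm_def]; simp
    rw [hn, e, map_smul, hL, Real.norm_eq_abs, smul_eq_mul] at this
    refine le_trans (le_of_eq ?_) this
    congr 1; ring
  · intro V hV
    have := @H3 V (by
      rw [Real.dist_eq, sub_zero, abs_of_nonneg hV.1]
      have := hV.2.trans (min_le_right _ _)
      linarith)
    rw [h0, Real.dist_eq, sub_zero] at this
    exact this.le

noncomputable def Fq (c K μ H U : ℝ) : ℝ := 2 * H * (H - ((U - 1) * (U - μ) - c * K * U))
noncomputable def Gq (K μ H U : ℝ) : ℝ := H * (U + K) - U * (U - 1) * (U - μ)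
noncomputable def cut (c K μ M ε U x : ℝ) : ℝ :=
  Fq c K μ (max 0 (min x M)) U / max ε (Gq K μ (max 0 (min x M)) U)

lemma quot_lip (f1 f2 g1 g2 A B C ε d : ℝ) (hε : 0 < ε) (h1 : ε ≤ g1) (h2 : ε ≤ g2)
    (hf : |f1 - f2| ≤ A * d) (hg : |g1 - g2| ≤ B * d) (hC : |f2| ≤ C) :
    |f1 / g1 - f2 / g2| ≤ (A / ε + C * B / ε ^ 2) * d := by
  have hg1 : 0 < g1 := by linarith
  have hg2 : 0 < g2 := by linarith
  have hA : 0 ≤ A * d := (abs_nonneg _).trans hf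
  have hB : 0 ≤ B * d := (abs_nonneg _).trans hg
  have hC0 : 0 ≤ C := (abs_nonneg _).trans hC
  have e : f1 / g1 - f2 / g2 = (f1 - f2) / g1 + f2 * (g2 - g1) / (g1 * g2) := by
    field_simp; ring
  rw [e]
  refine (abs_add_le _ _).trans ?_
  have e1 : |(f1 - f2) / g1| ≤ A * d / ε := by
    rw [abs_div, abs_of_pos hg1]
    gcongr
  have e2 : |f2 * (g2 - g1) / (g1 * g2)| ≤ C * (B * d) / ε ^ 2 := by
    rw [abs_div, abs_mul, abs_of_pos (mul_pos hg1 hg2), abs_sub_comm g2 g1, pow_two]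
    gcongr
  calc _ ≤ A * d / ε + C * (B * d) / ε ^ 2 := add_le_add e1 e2
    _ = _ := by ring

lemma cut_props (c K μ M ε b : ℝ) (hc : 0 < c) (hK : 0 < K) (hμ0 : 0 < μ) (hμ1 : μ < 1)
    (hM : 0 ≤ M) (hε : 0 < ε) :
    ∃ L C : NNReal, ∀ U ∈ Icc 1 b, LipschitzWith L (cut c K μ M ε U) ∧
      ∀ x, |cut c K μ M ε U x| ≤ C := by
  set Q := b ^ 2 + c * K * b with hQ
  set A := 2 * (2 * M + Q)
  set B := b + K
  set C := 2 * M * (M + Q)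
  refine ⟨Real.toNNReal (A / ε + C * B / ε ^ 2), Real.toNNReal (C / ε), ?_⟩
  intro U hU
  have hb : 1 ≤ b := hU.1.trans hU.2
  have hQ0 : 0 ≤ Q := by positivity
  have hA0 : 0 ≤ A := by positivity
  have hB0 : 0 ≤ B := by positivity
  have hC0 : 0 ≤ C := by positivity
  have hq : |(U - 1) * (U - μ) - c * K * U| ≤ Q := by
    have h1 : 0 ≤ (U - 1) * (U - μ) := mul_nonneg (by linarith [hU.1]) (by linarith [hU.1])
    have h2 : (U - 1) * (U - μ) ≤ b * b :=
      mul_le_mul (by linarith [hU.2]) (by linarith [hU.2]) (by linarith [hU.1]) (by linarith)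
    have h3 : c * K * U ≤ c * K * b := mul_le_mul_of_nonneg_left hU.2 (by positivity)
    have h4 : 0 ≤ c * K * U := mul_nonneg (by positivity) (by linarith [hU.1])
    rw [abs_le]; constructor <;> nlinarith
  have hFb : ∀ x, |Fq c K μ (max 0 (min x M)) U| ≤ C := by
    intro x
    obtain ⟨h1, h2⟩ := clamp_mem 0 M x hM
    set y := max 0 (min x M)
    unfold Fq
    rw [abs_mul, abs_of_nonneg (by positivity : 0 ≤ 2 * y)]
    have : |y - ((U - 1) * (U - μ) - c * K * U)| ≤ M + Q :=
      (abs_sub _ _).trans (add_le_add (by rwa [abs_of_nonneg h1]) hq)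
    exact mul_le_mul (by linarith) this (abs_nonneg _) (by positivity)
  constructor
  · refine LipschitzWith.of_dist_le_mul ?_
    intro x x'
    rw [Real.coe_toNNReal _ (by positivity), Real.dist_eq, Real.dist_eq]
    obtain ⟨h1, h2⟩ := clamp_mem 0 M x hM
    obtain ⟨h1', h2'⟩ := clamp_mem 0 M x' hM
    have hcl := clamp_lip 0 M x x'
    have hFb' := hFb x'
    unfold cut
    set y := max 0 (min x M)
    set y' := max 0 (min x' M)
    refine quot_lip _ _ _ _ A B C ε _ hε (le_max_left _ _) (le_max_left _ _) ?_ ?_ hFb'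
    · have e : Fq c K μ y U - Fq c K μ y' U
        = 2 * ((y + y') - ((U - 1) * (U - μ) - c * K * U)) * (y - y') := by
        unfold Fq; ring
      rw [e, abs_mul, abs_mul, abs_of_pos (two_pos : (0:ℝ) < 2)]
      have : |y + y' - ((U - 1) * (U - μ) - c * K * U)| ≤ 2 * M + Q :=
        (abs_sub _ _).trans (add_le_add (by rw [abs_of_nonneg (by linarith)]; linarith) hq)
      exact mul_le_mul (by linarith) hcl (abs_nonneg _) hA0
    · refine (abs_max_sub_max_le_max _ _ _ _).trans ?_
      rw [sub_self, abs_zero]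
      refine max_le (by positivity) ?_
      have e : Gq K μ y U - Gq K μ y' U = (U + K) * (y - y') := by unfold Gq; ring
      rw [e, abs_mul, abs_of_pos (by linarith [hU.1])]
      exact mul_le_mul (by linarith [hU.2]) hcl (abs_nonneg _) hB0
  · intro x
    rw [Real.coe_toNNReal _ (by positivity)]
    unfold cut
    have h3 : ε ≤ max ε (Gq K μ (max 0 (min x M)) U) := le_max_left _ _
    rw [abs_div, abs_of_pos (hε.trans_le h3)]
    have := hFb x
    gcongr

lemma cut_exists (c K μ M ε a b x0 : ℝ) (hc : 0 < c) (hK : 0 < K) (hμ0 : 0 < μ) (hμ1 : μ < 1)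
    (hM : 0 ≤ M) (hε : 0 < ε) (ha : 1 ≤ a) (hab : a ≤ b) :
    ∃ h : ℝ → ℝ, h a = x0 ∧
      ∀ U ∈ Icc a b, HasDerivWithinAt h (cut c K μ M ε U (h U)) (Icc a b) U := by
  obtain ⟨L, C, hLC⟩ := cut_props c K μ M ε b hc hK hμ0 hμ1 hM hε
  have hsub : Icc a b ⊆ Icc 1 b := Icc_subset_Icc_left ha
  have hP : IsPicardLindelof (cut c K μ M ε) (tmin := a) (tmax := b) ⟨a, le_rfl, hab⟩ x0
      (C * Real.toNNReal (b - a)) 0 C L := by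
    constructor
    · intro t ht
      exact (hLC t (hsub ht)).1.lipschitzOnWith
    · intro x _
      have : Continuous (fun U => cut c K μ M ε U x) := by
        unfold cut Fq Gq
        refine Continuous.div (by fun_prop) (by fun_prop) ?_
        intro U
        exact (hε.trans_le (le_max_left _ _)).ne'
      exact this.continuousOn
    · intro t ht x _
      exact (hLC t (hsub ht)).2 x
    · simp [hab]
  exact hP.exists_eq_forall_mem_Icc_hasDerivWithinAt₀

lemma cut_unique (c K μ M ε a b t₀ : ℝ) (hc : 0 < c) (hK : 0 < K) (hμ0 : 0 < μ) (hμ1 : μ < 1)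
    (hM : 0 ≤ M) (hε : 0 < ε) (ha : 1 ≤ a) (ht : t₀ ∈ Icc a b) (f g : ℝ → ℝ)
    (hf : ∀ U ∈ Icc a b, HasDerivWithinAt f (cut c K μ M ε U (f U)) (Icc a b) U)
    (hg : ∀ U ∈ Icc a b, HasDerivWithinAt g (cut c K μ M ε U (g U)) (Icc a b) U)
    (h : f t₀ = g t₀) : EqOn f g (Icc a b) := by
  obtain ⟨L, C, hLC⟩ := cut_props c K μ M ε b hc hK hμ0 hμ1 hM hε
  have hsub : Icc a b ⊆ Icc 1 b := Icc_subset_Icc_left ha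
  have hfc : ContinuousOn f (Icc a b) := fun U hU => (hf U hU).continuousWithinAt
  have hgc : ContinuousOn g (Icc a b) := fun U hU => (hg U hU).continuousWithinAt
  rw [← Icc_union_Icc_eq_Icc ht.1 ht.2]
  apply EqOn.union
  · have hs : Icc a t₀ ⊆ Icc a b := Icc_subset_Icc_right ht.2
    refine ODE_solution_unique_of_mem_Icc_left (v := cut c K μ M ε) (s := fun _ => univ) (K := L)
      (fun t ht' => (hLC t (hsub (hs (Ioc_subset_Icc_self ht')))).1.lipschitzOnWith)
      (hfc.mono hs) ?_ (fun _ _ => mem_univ _) (hgc.mono hs) ?_ (fun _ _ => mem_univ _) h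
    · intro t ht'
      exact (hf t (hs (Ioc_subset_Icc_self ht'))).mono_of_mem_nhdsWithin
        (Icc_mem_nhdsLE_of_mem ⟨ht'.1, ht'.2.trans ht.2⟩)
    · intro t ht'
      exact (hg t (hs (Ioc_subset_Icc_self ht'))).mono_of_mem_nhdsWithin
        (Icc_mem_nhdsLE_of_mem ⟨ht'.1, ht'.2.trans ht.2⟩)
  · have hs : Icc t₀ b ⊆ Icc a b := Icc_subset_Icc_left ht.1
    refine ODE_solution_unique_of_mem_Icc_right (v := cut c K μ M ε) (s := fun _ => univ) (K := L)
      (fun t ht' => (hLC t (hsub (hs (Ico_subset_Icc_self ht')))).1.lipschitzOnWith)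
      (hfc.mono hs) ?_ (fun _ _ => mem_univ _) (hgc.mono hs) ?_ (fun _ _ => mem_univ _) h
    · intro t ht'
      exact (hf t (hs (Ico_subset_Icc_self ht'))).mono_of_mem_nhdsWithin
        (Icc_mem_nhdsGE_of_mem ⟨ht.1.trans ht'.1, ht'.2⟩)
    · intro t ht'
      exact (hg t (hs (Ico_subset_Icc_self ht'))).mono_of_mem_nhdsWithin
        (Icc_mem_nhdsGE_of_mem ⟨ht.1.trans ht'.1, ht'.2⟩)

lemma cut_eq (c K μ M ε U x : ℝ) (h0 : 0 ≤ x) (hM : x ≤ M) (hG : ε ≤ Gq K μ x U) :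
    cut c K μ M ε U x = Fq c K μ x U / Gq K μ x U := by
  unfold cut
  rw [clamp_eq 0 M x ⟨h0, hM⟩, max_eq_right hG]

lemma pos_of_Gq (K μ x U : ℝ) (hK : 0 < K) (hμ1 : μ < 1) (hU : 1 ≤ U) (hG : 0 < Gq K μ x U) :
    0 < x := by
  unfold Gq at hG
  have h1 : 0 ≤ U * (U - 1) * (U - μ) :=
    mul_nonneg (mul_nonneg (by linarith) (by linarith)) (by linarith)
  by_contra hx
  push Not at hx
  nlinarith [mul_nonneg (neg_nonneg.2 hx) (by linarith : 0 ≤ U + K)]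

/-- Extension to the right inside the region. -/
lemma ext_sol (c K μ a b x0 : ℝ) (hc : 0 < c) (hK : 0 < K) (hμ0 : 0 < μ) (hμ1 : μ < 1)
    (ha : 1 < a) (hab : a ≤ b)
    (hX : ∀ U ∈ Icc a b, 0 < Gq K μ (c * U ^ 2) U)
    (hx0 : 0 < Gq K μ x0 a) (hx1 : x0 < c * a ^ 2) :
    ∃ h : ℝ → ℝ, h a = x0 ∧ ∃ ε > 0, ∀ U ∈ Icc a b,
      HasDerivWithinAt h (Fq c K μ (h U) U / Gq K μ (h U) U) (Icc a b) U ∧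
      ε ≤ Gq K μ (h U) U ∧ h U < c * U ^ 2 := by
  have hne : (Icc a b).Nonempty := ⟨a, le_rfl, hab⟩
  obtain ⟨u0, hu0, hmin0⟩ := isCompact_Icc.exists_isMinOn hne
    (f := fun U => Gq K μ (c * U ^ 2) U) (by unfold Gq; fun_prop)
  obtain ⟨u1, hu1, hmin1⟩ := isCompact_Icc.exists_isMinOn hne
    (f := fun U => Fq c K μ (U * (U - 1) * (U - μ) / (U + K)) U) (by
      unfold Fq
      have : ContinuousOn (fun U : ℝ => U * (U - 1) * (U - μ) / (U + K)) (Icc a b) := by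
        refine ContinuousOn.div (by fun_prop) (by fun_prop) ?_
        intro U hU
        linarith [hU.1]
      fun_prop)
  set g0 := Gq K μ (c * u0 ^ 2) u0 with hg0
  have hg0p : 0 < g0 := hX u0 hu0
  set f0 := Fq c K μ (u1 * (u1 - 1) * (u1 - μ) / (u1 + K)) u1 with hf0
  have hq : ∀ U ∈ Icc a b, 0 < U * (U - 1) * (U - μ) / (U + K) ∧
      0 < U * (U - 1) * (U - μ) / (U + K) - ((U - 1) * (U - μ) - c * K * U) := by
    intro U hU
    have h1 : 1 < U := ha.trans_le hU.1
    have hUK : 0 < U + K := by linarith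
    constructor
    · exact div_pos (mul_pos (mul_pos (by linarith) (by linarith)) (by linarith)) hUK
    · have e : U * (U - 1) * (U - μ) / (U + K) - ((U - 1) * (U - μ) - c * K * U)
        = K * (Gq K μ (c * U ^ 2) U) / (U * (U + K)) := by
        unfold Gq
        have : U ≠ 0 := by linarith
        field_simp
        ring
      rw [e]
      have := hX U hU
      exact div_pos (mul_pos hK this) (mul_pos (by linarith) hUK)
  have hf0p : 0 < f0 := by
    obtain ⟨h1, h2⟩ := hq u1 hu1
    rw [hf0]; unfold Fq
    exact mul_pos (by linarith) h2
  set P := 3 * b ^ 2 + 1 with hP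
  have hPp : 0 < P := by positivity
  set ε := min (min (Gq K μ x0 a) g0) (min 1 (f0 / (2 * P))) with hε
  have hεp : 0 < ε := by
    refine lt_min (lt_min hx0 hg0p) (lt_min one_pos (by positivity))
  have hε1 : ε ≤ Gq K μ x0 a := (min_le_left _ _).trans (min_le_left _ _)
  have hε2 : ε ≤ g0 := (min_le_left _ _).trans (min_le_right _ _)
  have hε3 : ε ≤ 1 := (min_le_right _ _).trans (min_le_left _ _)
  have hε4 : ε ≤ f0 / (2 * P) := (min_le_right _ _).trans (min_le_right _ _)
  have hb1 : 1 < b := ha.trans_le hab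
  set M := c * b ^ 2 + b ^ 3 + 1 with hM
  have hM0 : 0 ≤ M := by positivity
  obtain ⟨h, hha, hh⟩ := cut_exists c K μ M ε a b x0 hc hK hμ0 hμ1 hM0 hεp ha.le hab
  have hhc : ContinuousOn h (Icc a b) := fun U hU => (hh U hU).continuousWithinAt
  have hlow : ∀ U ∈ Icc a b, ε ≤ Gq K μ (h U) U := by
    have key := image_le_of_deriv_right_lt_deriv_boundary' (a := a) (b := b)
      (f := fun _ => ε) (f' := fun _ => 0) (B := fun U => Gq K μ (h U) U)
      (B' := fun U => cut c K μ M ε U (h U) * (U + K) + h U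
        - (3 * U ^ 2 - 2 * (1 + μ) * U + μ))
      continuousOn_const (fun x _ => hasDerivWithinAt_const _ _ _) (by simp only [hha]; exact hε1)
      (by unfold Gq; fun_prop) ?_ ?_
    · exact fun U hU => key hU
    · intro U hU
      have hd := (hh U (Ico_subset_Icc_self hU)).mono_of_mem_nhdsWithin
        (Icc_mem_nhdsGE_of_mem hU)
      have hd2 : HasDerivWithinAt (fun U : ℝ => U + K) 1 (Ici U) U :=
        ((hasDerivAt_id U).add_const K).hasDerivWithinAt
      have hd3 : HasDerivWithinAt (fun U : ℝ => U * (U - 1) * (U - μ))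
          (3 * U ^ 2 - 2 * (1 + μ) * U + μ) (Ici U) U := by
        have := (((hasDerivAt_id U).mul ((hasDerivAt_id U).sub_const 1)).mul
          ((hasDerivAt_id U).sub_const μ)).hasDerivWithinAt (s := Ici U)
        refine HasDerivWithinAt.congr_deriv this ?_
        simp only [id, Pi.mul_apply]
        ring
      unfold Gq
      refine HasDerivWithinAt.congr_deriv ((hd.mul hd2).sub hd3) ?_
      ring
    · intro U hU hφ
      have hU' := Ico_subset_Icc_self hU
      have hU1 : 1 < U := ha.trans_le hU.1
      have hUK : 0 < U + K := by linarith
      have hUb : U < b := hU.2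
      obtain ⟨hq1, hq2⟩ := hq U hU'
      have hx : h U = U * (U - 1) * (U - μ) / (U + K) + ε / (U + K) := by
        rw [← add_div, eq_div_iff hUK.ne', hφ]
        unfold Gq; ring
      have hεK : 0 < ε / (U + K) := by positivity
      have hhp : 0 ≤ h U := by linarith
      have hpb : U * (U - 1) * (U - μ) ≤ b ^ 3 := by
        have h1 : U * (U - 1) ≤ b * b :=
          mul_le_mul (by linarith) (by linarith) (by linarith) (by linarith)
        have h2 : U * (U - 1) * (U - μ) ≤ b * b * b :=
          mul_le_mul h1 (by linarith) (by linarith) (by positivity)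
        linarith [h2, (by ring : b * b * b = b ^ 3)]
      have hhM : h U ≤ M := by
        rw [hx, ← add_div, div_le_iff₀ hUK]
        have : 0 ≤ c * b ^ 2 := by positivity
        nlinarith
      have hF : f0 ≤ Fq c K μ (h U) U := by
        have h1 : f0 ≤ _ := hmin1 hU'
        refine h1.trans ?_
        unfold Fq
        refine mul_le_mul (by linarith) (by linarith) hq2.le (by linarith)
      rw [cut_eq c K μ M ε U (h U) hhp hhM hφ.le, ← hφ]
      have h5 : 2 * P ≤ Fq c K μ (h U) U / ε := by
        rw [le_div_iff₀ hεp]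
        rw [le_div_iff₀ (by positivity)] at hε4
        linarith
      have h6 : 2 * P ≤ Fq c K μ (h U) U / ε * (U + K) := by nlinarith
      have h7 : 3 * U ^ 2 - 2 * (1 + μ) * U + μ ≤ P := by
        rw [hP]
        nlinarith
      linarith
  have hsp : ∀ U ∈ Icc a b, HasDerivWithinAt (fun U => c * U ^ 2)
      (cut c K μ M ε U (c * U ^ 2)) (Icc a b) U := by
    intro U hU
    have hU1 : 1 < U := ha.trans_le hU.1
    have hg : g0 ≤ _ := hmin0 hU
    have hM' : c * U ^ 2 ≤ M := by
      have h1 : U ^ 2 ≤ b ^ 2 := pow_le_pow_left₀ (by linarith) hU.2 2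
      have h2 : 0 ≤ b ^ 3 := by positivity
      nlinarith
    rw [cut_eq c K μ M ε U (c * U ^ 2) (by positivity) hM' (hε2.trans hg)]
    have : Fq c K μ (c * U ^ 2) U / Gq K μ (c * U ^ 2) U = c * (2 * U) := by
      rw [div_eq_iff (hX U hU).ne']
      unfold Fq Gq
      ring
    rw [this]
    have := ((hasDerivAt_pow 2 U).const_mul c).hasDerivWithinAt (s := Icc a b)
    simpa using this
  have hup : ∀ U ∈ Icc a b, h U < c * U ^ 2 := by
    intro U hU
    by_contra hcon
    push Not at hcon
    have hs : Icc a U ⊆ Icc a b := Icc_subset_Icc_right hU.2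
    have hcont : ContinuousOn (fun U => h U - c * U ^ 2) (Icc a U) := by
      have := hhc.mono hs
      fun_prop
    obtain ⟨t, ht, hte⟩ := intermediate_value_Icc hU.1 hcont
      (show (0:ℝ) ∈ Icc _ _ from ⟨by simp only [hha]; linarith, by linarith⟩)
    have := cut_unique c K μ M ε a b t hc hK hμ0 hμ1 hM0 hεp ha.le (hs ht) h _ hh hsp
      (by linarith) (show a ∈ Icc a b from ⟨le_rfl, hab⟩)
    simp only [hha] at this
    linarith
  refine ⟨h, hha, ε, hεp, ?_⟩
  intro U hU
  refine ⟨?_, hlow U hU, hup U hU⟩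
  have hU1 : 1 < U := ha.trans_le hU.1
  rw [← cut_eq c K μ M ε U (h U)
    (pos_of_Gq K μ (h U) U hK hμ1 hU1.le (hεp.trans_le (hlow U hU))).le ?_ (hlow U hU)]
  · exact hh U hU
  · have h1 : U ^ 2 ≤ b ^ 2 := pow_le_pow_left₀ (by linarith) hU.2 2
    have h2 : 0 ≤ b ^ 3 := by positivity
    have := hup U hU
    nlinarith

/-- Uniqueness for solutions staying in the region. -/
lemma sol_unique (c K μ a b : ℝ) (hc : 0 < c) (hK : 0 < K) (hμ0 : 0 < μ) (hμ1 : μ < 1)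
    (ha : 1 < a) (hab : a ≤ b) (f g : ℝ → ℝ) (ε : ℝ) (hε : 0 < ε)
    (hf : ∀ U ∈ Icc a b, HasDerivWithinAt f (Fq c K μ (f U) U / Gq K μ (f U) U) (Icc a b) U ∧
      ε ≤ Gq K μ (f U) U ∧ f U < c * U ^ 2)
    (hg : ∀ U ∈ Icc a b, HasDerivWithinAt g (Fq c K μ (g U) U / Gq K μ (g U) U) (Icc a b) U ∧
      ε ≤ Gq K μ (g U) U ∧ g U < c * U ^ 2)
    (h : f a = g a) : EqOn f g (Icc a b) := by
  have key : ∀ f : ℝ → ℝ, (∀ U ∈ Icc a b,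
      HasDerivWithinAt f (Fq c K μ (f U) U / Gq K μ (f U) U) (Icc a b) U ∧
      ε ≤ Gq K μ (f U) U ∧ f U < c * U ^ 2) →
      ∀ U ∈ Icc a b, HasDerivWithinAt f (cut c K μ (c * b ^ 2) ε U (f U)) (Icc a b) U := by
    intro f hf U hU
    obtain ⟨h1, h2, h3⟩ := hf U hU
    have hU1 : 1 < U := ha.trans_le hU.1
    have h4 : U ^ 2 ≤ b ^ 2 := pow_le_pow_left₀ (by linarith) hU.2 2
    rw [cut_eq c K μ _ ε U (f U) (pos_of_Gq K μ (f U) U hK hμ1 hU1.le (hε.trans_le h2)).le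
      (by nlinarith) h2]
    exact h1
  exact cut_unique c K μ (c * b ^ 2) ε a b a hc hK hμ0 hμ1 (by positivity) hε ha.le ⟨le_rfl, hab⟩
    f g (key f hf) (key g hg) h

noncomputable def Dq (K μ : ℝ) (p : ℝ × ℝ) : ℝ :=
  p.2 * (1 + p.1 + K) - (1 + p.1) * (1 + p.1 - μ)
noncomputable def Phiq (c K μ : ℝ) (p : ℝ × ℝ) : ℝ :=
  2 * p.2 * (p.1 * p.2 - (p.1 * (1 + p.1 - μ) - c * K * (1 + p.1))) / Dq K μ p - p.2

lemma local_sol (c K μ D : ℝ) (hc : 0 < c) (hK : 0 < K) (hμ1 : μ < 1) (hD : 1 < D) :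
    ∃ a, 1 < a ∧ a < D ∧ ∃ h : ℝ → ℝ, Continuous h ∧ h 1 = 0 ∧
      Tendsto (fun U => h U / (U - 1)) (𝓝[>] 1) (𝓝 ((2 * c * K + (1 - μ)) / (1 + K))) ∧
      ∀ U ∈ Ioc 1 a, HasDerivAt h (Fq c K μ (h U) U / Gq K μ (h U) U) U ∧
        0 < Gq K μ (h U) U ∧ h U < c * U ^ 2 := by
  set s := (2 * c * K + (1 - μ)) / (1 + K) with hs
  have hcK : 0 < c * K := mul_pos hc hK
  have hs1 : s * (1 + K) - (1 - μ) = 2 * (c * K) := by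
    rw [hs]; field_simp; ring
  have hD0 : Dq K μ (0, s) = 2 * (c * K) := by
    unfold Dq; simp only; linarith
  have hcd : ContDiffAt ℝ 1 (Phiq c K μ) (0, s) := by
    unfold Phiq
    refine ContDiffAt.sub (ContDiffAt.div (by fun_prop) (by unfold Dq; fun_prop) ?_) (by fun_prop)
    rw [hD0]; positivity
  have hstr := hcd.hasStrictFDerivAt one_ne_zero
  set lam := 1 + (1 - μ) / (2 * (c * K)) with hlam
  have hlamp : 0 < lam := by
    have : 0 < (1 - μ) / (2 * (c * K)) := div_pos (by linarith) (by positivity)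
    linarith
  have hPhi0 : Phiq c K μ (0, s) = 0 := by
    unfold Phiq
    rw [hD0]
    field_simp
    ring
  have hLd : fderiv ℝ (Phiq c K μ) (0, s) (0, 1) = -lam := by
    have h1 : HasDerivAt (fun w : ℝ => ((0 : ℝ), w)) (0, 1) s :=
      (hasDerivAt_const s (0 : ℝ)).prodMk (hasDerivAt_id s)
    have h2 := hstr.hasFDerivAt.comp_hasDerivAt s h1
    have h3 : HasDerivAt (fun w : ℝ => 2 * (c * K) * w / (w * (1 + K) - (1 - μ)) - w)
        ((2 * (c * K) * 1 * (s * (1 + K) - (1 - μ)) - 2 * (c * K) * s * (1 * (1 + K)))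
          / (s * (1 + K) - (1 - μ)) ^ 2 - 1) s := by
      refine HasDerivAt.sub (HasDerivAt.div ((hasDerivAt_id s).const_mul _)
        (((hasDerivAt_id s).mul_const _).sub_const _) ?_) (hasDerivAt_id s)
      show s * (1 + K) - (1 - μ) ≠ 0
      rw [hs1]; positivity
    have e : (Phiq c K μ ∘ fun w : ℝ => ((0 : ℝ), w))
        = fun w : ℝ => 2 * (c * K) * w / (w * (1 + K) - (1 - μ)) - w := by
      funext w
      simp only [Function.comp_def, Phiq, Dq]
      congr 2 <;> ring
    rw [e] at h2
    rw [h2.unique h3, hs1, hlam]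
    have h4 : s * (1 + K) = 2 * (c * K) + (1 - μ) := by linarith
    have h5 : 2 * (c * K) * 1 * (2 * (c * K)) - 2 * (c * K) * s * (1 * (1 + K))
        = - (2 * (c * K) * (1 - μ)) := by
      linear_combination (-(2 * (c * K))) * h4
    rw [h5]
    field_simp
    ring
  have hce : ∀ᶠ x in 𝓝 ((0 : ℝ), s), ContinuousAt (Phiq c K μ) x := by
    filter_upwards [hcd.eventually (by simp)] with x hx
    exact hx.continuousAt
  obtain ⟨δ, hδ, w, hwc, hw0, hw⟩ := sing_ode (Phiq c K μ) s lam hlamp _ hstr hLd hPhi0 hce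
  have hev1 : ∀ᶠ V in 𝓝 (0 : ℝ), 0 < Dq K μ (V, w V) := by
    have : Continuous (fun V => Dq K μ (V, w V)) := by unfold Dq; fun_prop
    refine this.continuousAt.eventually (lt_mem_nhds ?_)
    simp only [hw0, hD0]; positivity
  have hev2 : ∀ᶠ V in 𝓝 (0 : ℝ), 0 < c * (1 + V) ^ 2 - V * w V := by
    have : Continuous (fun V => c * (1 + V) ^ 2 - V * w V) := by fun_prop
    refine this.continuousAt.eventually (lt_mem_nhds ?_)
    simpa using hc
  obtain ⟨e, he, hball⟩ := Metric.eventually_nhds_iff.1 (hev1.and hev2)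
  set d := min (min (δ / 2) (e / 2)) ((D - 1) / 2) with hd
  have hd0 : 0 < d := lt_min (lt_min (by positivity) (by positivity)) (by linarith)
  have hd1 : d ≤ δ / 2 := (min_le_left _ _).trans (min_le_left _ _)
  have hd2 : d ≤ e / 2 := (min_le_left _ _).trans (min_le_right _ _)
  have hd3 : d ≤ (D - 1) / 2 := min_le_right _ _
  refine ⟨1 + d, by linarith, by linarith, fun U => (U - 1) * w (U - 1), by fun_prop, by simp,
    ?_, ?_⟩
  · have h1 : Tendsto (fun U : ℝ => w (U - 1)) (𝓝[>] 1) (𝓝 s) := by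
      have : Continuous (fun U : ℝ => w (U - 1)) := by fun_prop
      have h2 := this.tendsto 1
      simp only [sub_self, hw0] at h2
      exact h2.mono_left nhdsWithin_le_nhds
    refine h1.congr' ?_
    filter_upwards [self_mem_nhdsWithin] with U hU
    have : U - 1 ≠ 0 := by
      have : 1 < U := hU
      linarith
    field_simp
  · intro U hU
    have hV0 : 0 < U - 1 := by linarith [hU.1]
    obtain ⟨hp1, hp2⟩ := @hball (U - 1) (by
      rw [Real.dist_eq, sub_zero, abs_of_pos hV0]; linarith [hU.2])
    have hwd := hw (U - 1) ⟨hV0, by linarith [hU.2]⟩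
    have hG : Gq K μ ((U - 1) * w (U - 1)) U = (U - 1) * Dq K μ (U - 1, w (U - 1)) := by
      unfold Gq Dq; ring
    refine ⟨?_, ?_, ?_⟩
    · have h1 : HasDerivAt (fun U : ℝ => w (U - 1)) _ U := hwd.comp_sub_const U 1
      have h2 := ((hasDerivAt_id U).sub_const 1).mul h1
      refine HasDerivAt.congr_deriv h2 ?_
      simp only [id]
      rw [hG]
      unfold Phiq Fq
      simp only
      set DD := Dq K μ (U - 1, w (U - 1))
      have := hp1.ne'
      have := hV0.ne'
      field_simp
      ring
    · rw [hG]; exact mul_pos hV0 hp1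
    · have : c * (1 + (U - 1)) ^ 2 = c * U ^ 2 := by ring
      simp only
      linarith

lemma main_q (c K μ D : ℝ) (hc : 0 < c) (hK : 0 < K) (hμ0 : 0 < μ) (hμ1 : μ < 1) (hD : 1 < D)
    (hX : ∀ U ∈ Ioo 1 D, 0 < Gq K μ (c * U ^ 2) U) (hXD : Gq K μ (c * D ^ 2) D = 0) :
    ∃ H : ℝ → ℝ, ContinuousOn H (Icc 1 D) ∧ H 1 = 0 ∧ H D = c * D ^ 2 ∧
      (∀ U ∈ Ioo 1 D, HasDerivAt H (Fq c K μ (H U) U / Gq K μ (H U) U) U ∧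
        0 < Gq K μ (H U) U ∧ H U < c * U ^ 2) ∧
      Tendsto (fun U => H U / (U - 1)) (𝓝[>] 1) (𝓝 ((2 * c * K + (1 - μ)) / (1 + K))) := by
  obtain ⟨a, ha1, haD, h0, h0c, h01, h0t, h0s⟩ := local_sol c K μ D hc hK hμ1 hD
  obtain ⟨hda, hGa, hua⟩ := h0s a ⟨ha1, le_rfl⟩
  have hex : ∀ b, ∃ h : ℝ → ℝ, ∃ ε : ℝ, a ≤ b → b < D → h a = h0 a ∧ 0 < ε ∧ ∀ U ∈ Icc a b,
      HasDerivWithinAt h (Fq c K μ (h U) U / Gq K μ (h U) U) (Icc a b) U ∧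
      ε ≤ Gq K μ (h U) U ∧ h U < c * U ^ 2 := by
    intro b
    by_cases hb : a ≤ b ∧ b < D
    · obtain ⟨h, h1, ε, h2, h3⟩ := ext_sol c K μ a b (h0 a) hc hK hμ0 hμ1 ha1 hb.1
        (fun U hU => hX U ⟨ha1.trans_le hU.1, hU.2.trans_lt hb.2⟩) hGa hua
      exact ⟨h, ε, fun _ _ => ⟨h1, h2, h3⟩⟩
    · exact ⟨0, 0, fun h1 h2 => absurd ⟨h1, h2⟩ hb⟩
  choose hh ε hhs using hex
  set H : ℝ → ℝ := fun U => if U ≤ a then h0 U else if U < D then hh ((U + D) / 2) U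
    else c * D ^ 2 with hH
  have hHle : ∀ U, U ≤ a → H U = h0 U := fun U hU => by simp only [hH]; rw [if_pos hU]
  have hHeq : ∀ b, a ≤ b → b < D → ∀ U ∈ Icc a b, H U = hh b U := by
    intro b hab hbD U hU
    rcases eq_or_lt_of_le hU.1 with h | h
    · rw [← h, hHle a le_rfl, (hhs b hab hbD).1]
    · have hUD : U < D := hU.2.trans_lt hbD
      have e : H U = hh ((U + D) / 2) U := by
        simp only [hH]; rw [if_neg (not_le.2 h), if_pos hUD]
      rw [e]
      obtain ⟨p1, p2, p3⟩ := hhs b hab hbD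
      obtain ⟨q1, q2, q3⟩ := hhs ((U + D) / 2) (by linarith) (by linarith)
      refine sol_unique c K μ a U hc hK hμ0 hμ1 ha1 hU.1 (hh ((U + D) / 2)) (hh b)
        (min (ε ((U + D) / 2)) (ε b)) (lt_min q2 p2) ?_ ?_ (q1.trans p1.symm) ⟨hU.1, le_rfl⟩
      · intro t ht
        have hsub : Icc a U ⊆ Icc a ((U + D) / 2) := Icc_subset_Icc_right (by linarith)
        obtain ⟨r1, r2, r3⟩ := q3 t (hsub ht)
        exact ⟨r1.mono hsub, (min_le_left _ _).trans r2, r3⟩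
      · intro t ht
        have hsub : Icc a U ⊆ Icc a b := Icc_subset_Icc_right hU.2
        obtain ⟨r1, r2, r3⟩ := p3 t (hsub ht)
        exact ⟨r1.mono hsub, (min_le_right _ _).trans r2, r3⟩
  have hHD : H D = c * D ^ 2 := by
    simp only [hH]; rw [if_neg (not_le.2 haD), if_neg (lt_irrefl _)]
  have hev1 : ∀ U, U < a → H =ᶠ[𝓝 U] h0 := by
    intro U hU
    filter_upwards [gt_mem_nhds hU] with v hv
    exact hHle v (le_of_lt hv)
  have hsol : ∀ U ∈ Ioo 1 D, HasDerivAt H (Fq c K μ (H U) U / Gq K μ (H U) U) U ∧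
        0 < Gq K μ (H U) U ∧ H U < c * U ^ 2 := by
    intro U hU
    rcases lt_trichotomy U a with h | h | h
    · obtain ⟨r1, r2, r3⟩ := h0s U ⟨hU.1, h.le⟩
      rw [hHle U h.le]
      exact ⟨r1.congr_of_eventuallyEq (hev1 U h), r2, r3⟩
    · subst h
      rw [hHle U le_rfl]
      refine ⟨?_, hGa, hua⟩
      have h1 : HasDerivWithinAt H (Fq c K μ (h0 U) U / Gq K μ (h0 U) U) (Iic U) U :=
        hda.hasDerivWithinAt.congr (fun v hv => hHle v hv) (hHle U le_rfl)
      set b := (U + D) / 2 with hb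
      have hUb : U < b := by linarith
      have hbD : b < D := by linarith
      obtain ⟨p1, p2, p3⟩ := hhs b hUb.le hbD
      have h2 := (p3 U ⟨le_rfl, hUb.le⟩).1
      rw [p1] at h2
      have h3 : HasDerivWithinAt H (Fq c K μ (h0 U) U / Gq K μ (h0 U) U) (Icc U b) U :=
        h2.congr (fun v hv => hHeq b hUb.le hbD v hv) (hHeq b hUb.le hbD U ⟨le_rfl, hUb.le⟩)
      have h4 : HasDerivWithinAt H (Fq c K μ (h0 U) U / Gq K μ (h0 U) U) (Ici U) U :=
        h3.mono_of_mem_nhdsWithin (Icc_mem_nhdsGE_of_mem ⟨le_rfl, hUb⟩)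
      have h5 := h1.union h4
      rw [Iic_union_Ici, hasDerivWithinAt_univ] at h5
      exact h5
    · set b := (U + D) / 2 with hb
      have hUD := hU.2
      have hUb : U < b := by linarith
      have hbD : b < D := by linarith
      have hab : a ≤ b := by linarith
      obtain ⟨p1, p2, p3⟩ := hhs b hab hbD
      obtain ⟨r1, r2, r3⟩ := p3 U ⟨h.le, hUb.le⟩
      rw [hHeq b hab hbD U ⟨h.le, hUb.le⟩]
      refine ⟨?_, p2.trans_le r2, r3⟩
      refine (r1.hasDerivAt (Icc_mem_nhds h hUb)).congr_of_eventuallyEq ?_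
      filter_upwards [Icc_mem_nhds h hUb] with v hv
      exact hHeq b hab hbD v hv
  refine ⟨H, ?_, ?_, hHD, hsol, ?_⟩
  · intro U hU
    rcases eq_or_lt_of_le hU.1 with h | h
    · subst h
      exact (h0c.continuousAt.congr (hev1 1 ha1).symm).continuousWithinAt
    rcases eq_or_lt_of_le hU.2 with h' | h'
    · subst h'
      have hUK : 0 < U + K := by linarith
      have hlo : U * (U - 1) * (U - μ) / (U + K) = c * U ^ 2 := by
        rw [div_eq_iff hUK.ne']
        unfold Gq at hXD
        linarith
      have ht1 : Tendsto (fun v : ℝ => v * (v - 1) * (v - μ) / (v + K)) (𝓝[Icc 1 U] U)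
          (𝓝 (H U)) := by
        have : ContinuousAt (fun v : ℝ => v * (v - 1) * (v - μ) / (v + K)) U :=
          ContinuousAt.div (by fun_prop) (by fun_prop) hUK.ne'
        have := this.tendsto
        rw [hlo, ← hHD] at this
        exact this.mono_left nhdsWithin_le_nhds
      have ht2 : Tendsto (fun v : ℝ => c * v ^ 2) (𝓝[Icc 1 U] U) (𝓝 (H U)) := by
        rw [hHD]
        have : Continuous (fun v : ℝ => c * v ^ 2) := by fun_prop
        exact (this.tendsto U).mono_left nhdsWithin_le_nhds
      have hev : ∀ᶠ v in 𝓝[Icc 1 U] U, 1 < v ∧ v ≤ U := by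
        filter_upwards [nhdsWithin_le_nhds (lt_mem_nhds h), self_mem_nhdsWithin] with v hv hv'
        exact ⟨hv, hv'.2⟩
      refine tendsto_of_tendsto_of_tendsto_of_le_of_le' ht1 ht2 ?_ ?_
      · filter_upwards [hev] with v hv
        rcases eq_or_lt_of_le hv.2 with hh' | hh'
        · rw [hh', hlo, hHD]
        · obtain ⟨-, r2, -⟩ := hsol v ⟨hv.1, hh'⟩
          rw [div_le_iff₀ (by linarith [hv.1])]
          unfold Gq at r2
          linarith
      · filter_upwards [hev] with v hv
        rcases eq_or_lt_of_le hv.2 with hh' | hh'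
        · rw [hh', hHD]
        · exact (hsol v ⟨hv.1, hh'⟩).2.2.le
    · exact (hsol U ⟨h, h'⟩).1.continuousAt.continuousWithinAt
  · rw [hHle 1 ha1.le, h01]
  · refine h0t.congr' ?_
    filter_upwards [nhdsWithin_le_nhds (hev1 1 ha1)] with U hU
    rw [hU]

/-- existence of an integral curve of `dH/dU = F/G` connecting
`B = (1,0)` (which it leaves with slope `γ(1-μ)/(1+k₂)`) to `D = (U_D,H_D)`, staying
strictly between the barrier `H_G` and the special solution `((γ-1)²/4) U²`. -/
theorem stmt15 (γ μ : ℝ) (hγ1 : 1 < γ) (hγ3 : γ < 3) (hμ0 : 0 < μ) (hμ1 : μ < 1) :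
    ∃ H : ℝ → ℝ,
      ContinuousOn H (Icc (1 : ℝ) (UD γ)) ∧
      H 1 = 0 ∧
      H (UD γ) = HD γ ∧
      (∀ U ∈ Ioo (1 : ℝ) (UD γ), HG γ μ U < H U ∧ H U < (γ - 1) ^ 2 / 4 * U ^ 2) ∧
      (∀ U ∈ Ioo (1 : ℝ) (UD γ), DifferentiableAt ℝ H U ∧
        deriv H U * G γ μ (H U) U = F γ μ (H U) U) ∧
      Tendsto (fun U : ℝ => H U / (U - 1)) (𝓝[>] (1 : ℝ))
        (𝓝 (γ * (1 - μ) / (1 + k₂ γ μ))) := by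
  have hg1 : 0 < γ - 1 := by linarith
  have hg3 : 0 < 3 - γ := by linarith
  have hK : 0 < k₂ γ μ := by
    unfold k₂
    exact div_pos (by linarith) hg1
  have hc : 0 < (γ - 1) ^ 2 / 4 := by positivity
  have hD : 1 < UD γ := by
    unfold UD
    rw [lt_div_iff₀ hg3]; linarith
  have hcK : (γ - 1) ^ 2 / 4 * k₂ γ μ = (γ - 1) * (1 - μ) / 2 := by
    unfold k₂; field_simp; ring
  have hfac : ∀ U, Gq (k₂ γ μ) μ ((γ - 1) ^ 2 / 4 * U ^ 2) U
      = U * ((2 - (3 - γ) * U) * ((γ + 1) * U - 2 * μ) / 4) := by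
    intro U
    unfold Gq
    linear_combination U ^ 2 * hcK
  have hF : ∀ H U, F γ μ H U = Fq ((γ - 1) ^ 2 / 4) (k₂ γ μ) μ H U := by
    intro H U
    unfold F Fq
    rw [hcK]; unfold k₁
    ring
  have hG : ∀ H U, G γ μ H U = Gq (k₂ γ μ) μ H U := fun H U => rfl
  obtain ⟨H, h1, h2, h3, h4, h5⟩ := main_q ((γ - 1) ^ 2 / 4) (k₂ γ μ) μ (UD γ) hc hK hμ0 hμ1 hD
    (by
      intro U hU
      rw [hfac]
      have hU1 := hU.1
      have hU2 : U * (3 - γ) < 2 := by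
        have := hU.2
        unfold UD at this
        rwa [lt_div_iff₀ hg3] at this
      have a1 : 0 < 2 - (3 - γ) * U := by linarith
      have a2 : 0 < (γ + 1) * U - 2 * μ := by nlinarith
      have : 0 < U := by linarith
      positivity)
    (by
      rw [hfac]
      have : (3 - γ) * UD γ = 2 := by unfold UD; field_simp
      rw [this]; ring)
  refine ⟨H, h1, h2, ?_, ?_, ?_, ?_⟩
  · rw [h3]; unfold UD HD; field_simp
    try ring
  · intro U hU
    obtain ⟨-, r2, r3⟩ := h4 U hU
    refine ⟨?_, r3⟩
    unfold HG
    rw [div_lt_iff₀ (by linarith [hU.1])]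
    unfold Gq at r2
    linarith
  · intro U hU
    obtain ⟨r1, r2, -⟩ := h4 U hU
    refine ⟨r1.differentiableAt, ?_⟩
    rw [r1.deriv, hF, hG, div_mul_cancel₀ _ r2.ne']
  · have e : γ * (1 - μ) = 2 * ((γ - 1) ^ 2 / 4) * k₂ γ μ + (1 - μ) := by
      linear_combination (-2) * hcK
    rw [e]
    exact h5
end

section
/- Let δ > 0 and μ = 1/δ. Let I ⊆ (0,∞) be an open interval and suppose H, U : I → ℝ are differentiable, Δ(H(y),U(y)) ≠ 0 for all y ∈ I, and the self-similar ODE system y·H'(y) = F(H(y),U(y))/Δ(H(y),U(y)), y·U'(y) = G(H(y),U(y))/Δ(H(y),U(y)) holds on I. Define, on the open set O = {(t,x) : t < 0, x > 0, x/(−t)^δ ∈ I}, the functions u(t,x) = −δ·(−t)^(δ−1)·y·U(y) and h(t,x) = δ²·(−t)^(2(δ−1))·y²·H(y)/(γ−1), where y = x/(−t)^δ. Then (h,u) satisfies the Euler system h_t + u·h_x + (γ−1)·h·u_x = 0 and u_t + u·u_x + h_x = 0 at every point of O. -/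
open Set

/-- Self-similar ansatz for the velocity: `u(t,x) = -δ(-t)^(δ-1) y U(y)`, `y = x/(-t)^δ`. -/
noncomputable def uAnsatz (δ : ℝ) (U : ℝ → ℝ) (p : ℝ × ℝ) : ℝ :=
  -δ * (-p.1) ^ (δ - 1) * (p.2 / (-p.1) ^ δ) * U (p.2 / (-p.1) ^ δ)
/-- Self-similar ansatz for the enthalpy: `h(t,x) = δ²(-t)^(2(δ-1)) y² H(y)/(γ-1)`. -/
noncomputable def hAnsatz (γ δ : ℝ) (H : ℝ → ℝ) (p : ℝ × ℝ) : ℝ :=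
  δ ^ 2 * (-p.1) ^ (2 * (δ - 1)) * (p.2 / (-p.1) ^ δ) ^ 2
    * H (p.2 / (-p.1) ^ δ) / (γ - 1)

/-- Derivative of the similarity variable. -/
theorem hasFDerivAt_simvar (δ : ℝ) (p : ℝ × ℝ) (hp : p.1 < 0) :
    HasFDerivAt (fun q : ℝ × ℝ => q.2 / (-q.1) ^ δ)
      ((δ * (p.2 / (-p.1) ^ δ) / (-p.1)) • ContinuousLinearMap.fst ℝ ℝ ℝ
        + (1 / (-p.1) ^ δ) • ContinuousLinearMap.snd ℝ ℝ ℝ) p := by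
  have hs : 0 < -p.1 := by linarith
  have hpos : 0 < (-p.1) ^ δ := Real.rpow_pos_of_pos hs δ
  have h1 : HasDerivAt (fun t : ℝ => ((-t) ^ δ)⁻¹) (δ / ((-p.1) ^ δ * (-p.1))) p.1 := by
    have := ((hasDerivAt_id p.1).neg.rpow_const (p := δ) (Or.inl hs.ne')).inv hpos.ne'
    refine HasDerivAt.congr_deriv this ?_
    change -(-1 * δ * (-p.1) ^ (δ - 1)) / ((-p.1) ^ δ) ^ 2 = _
    rw [Real.rpow_sub hs, Real.rpow_one]
    field_simp
  have h2 := (hasFDerivAt_snd (𝕜 := ℝ) (p := p)).mul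
    (h1.comp_hasFDerivAt p (hasFDerivAt_fst (𝕜 := ℝ) (p := p)))
  refine (h2.congr_fderiv ?_)
  ext <;> simp <;> field_simp

/-- Derivative of the ratio `x / (-t)`. -/
theorem hasFDerivAt_ratio (p : ℝ × ℝ) (hp : p.1 < 0) :
    HasFDerivAt (fun q : ℝ × ℝ => q.2 / (-q.1))
      ((p.2 / (-p.1) ^ 2) • ContinuousLinearMap.fst ℝ ℝ ℝ
        + (1 / (-p.1)) • ContinuousLinearMap.snd ℝ ℝ ℝ) p := by
  have h := hasFDerivAt_simvar 1 p hp
  simp only [Real.rpow_one] at h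
  refine h.congr_fderiv ?_
  have : p.1 ≠ 0 := hp.ne
  ext <;> simp <;> field_simp

theorem uAnsatz_eq (δ : ℝ) (U : ℝ → ℝ) (p : ℝ × ℝ) (hp : p.1 < 0) :
    uAnsatz δ U p = -δ * ((p.2 / (-p.1)) * U (p.2 / (-p.1) ^ δ)) := by
  have hs : 0 < -p.1 := by linarith
  have hpos : 0 < (-p.1) ^ δ := Real.rpow_pos_of_pos hs δ
  unfold uAnsatz
  rw [Real.rpow_sub hs, Real.rpow_one]
  generalize U _ = V
  generalize (-p.1) ^ δ = r at *
  generalize -p.1 = s at *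
  field_simp

theorem hAnsatz_eq (γ δ : ℝ) (H : ℝ → ℝ) (p : ℝ × ℝ) (hp : p.1 < 0) :
    hAnsatz γ δ H p =
      (δ ^ 2 / (γ - 1)) * (((p.2 / (-p.1)) * (p.2 / (-p.1))) * H (p.2 / (-p.1) ^ δ)) := by
  have hs : 0 < -p.1 := by linarith
  have hpos : 0 < (-p.1) ^ δ := Real.rpow_pos_of_pos hs δ
  unfold hAnsatz
  rw [mul_comm 2 (δ - 1), Real.rpow_mul hs.le, Real.rpow_sub hs, Real.rpow_one, Real.rpow_two]
  generalize H _ = V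
  generalize (-p.1) ^ δ = r at *
  generalize -p.1 = s at *
  field_simp

theorem eventually_neg_fst (p : ℝ × ℝ) (hp : p.1 < 0) : ∀ᶠ q : ℝ × ℝ in nhds p, q.1 < 0 :=
  (continuous_fst.tendsto p).eventually (gt_mem_nhds hp)

theorem fderiv_uAnsatz (δ : ℝ) (U : ℝ → ℝ) (p : ℝ × ℝ) (hp : p.1 < 0)
    (hU : DifferentiableAt ℝ U (p.2 / (-p.1) ^ δ)) (v : ℝ × ℝ) :
    fderiv ℝ (uAnsatz δ U) p v =
      -δ * ((p.2 / (-p.1)) * (deriv U (p.2 / (-p.1) ^ δ) *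
          (δ * (p.2 / (-p.1) ^ δ) / (-p.1) * v.1 + 1 / (-p.1) ^ δ * v.2))
        + U (p.2 / (-p.1) ^ δ) * (p.2 / (-p.1) ^ 2 * v.1 + 1 / (-p.1) * v.2)) := by
  have h := ((hasFDerivAt_ratio p hp).mul
    (hU.hasDerivAt.comp_hasFDerivAt p (hasFDerivAt_simvar δ p hp))).const_mul (-δ)
  have h' := h.congr_of_eventuallyEq
    ((eventually_neg_fst p hp).mono fun q hq => uAnsatz_eq δ U q hq)
  rw [h'.fderiv]
  simp
  ring

theorem fderiv_hAnsatz (γ δ : ℝ) (H : ℝ → ℝ) (p : ℝ × ℝ) (hp : p.1 < 0)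
    (hH : DifferentiableAt ℝ H (p.2 / (-p.1) ^ δ)) (v : ℝ × ℝ) :
    fderiv ℝ (hAnsatz γ δ H) p v =
      (δ ^ 2 / (γ - 1)) * ((p.2 / (-p.1)) * (p.2 / (-p.1)) * (deriv H (p.2 / (-p.1) ^ δ) *
          (δ * (p.2 / (-p.1) ^ δ) / (-p.1) * v.1 + 1 / (-p.1) ^ δ * v.2))
        + H (p.2 / (-p.1) ^ δ) *
          (2 * (p.2 / (-p.1)) * (p.2 / (-p.1) ^ 2 * v.1 + 1 / (-p.1) * v.2))) := by
  have h := (((hasFDerivAt_ratio p hp).mul (hasFDerivAt_ratio p hp)).mul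
    (hH.hasDerivAt.comp_hasFDerivAt p (hasFDerivAt_simvar δ p hp))).const_mul (δ ^ 2 / (γ - 1))
  have h' := h.congr_of_eventuallyEq
    ((eventually_neg_fst p hp).mono fun q hq => hAnsatz_eq γ δ H q hq)
  rw [h'.fderiv]
  simp
  ring

/-- if `(H,U)` solve the self-similar ODE system on an open interval
`I ⊆ (0,∞)` with `Δ ≠ 0`, then the self-similar ansatz (for `t < 0`, `x > 0`,
`x/(-t)^δ ∈ I`) solves the Euler system in enthalpy form. -/
theorem stmt18 (γ δ μ : ℝ) (hγ1 : 1 < γ) (hγ3 : γ < 3) (hδ : 0 < δ) (hμδ : μ = 1 / δ)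
    (I : Set ℝ) (a b : ℝ) (hIab : I = Ioo a b) (hIsub : I ⊆ Ioi (0 : ℝ))
    (H U : ℝ → ℝ)
    (hdH : ∀ y ∈ I, DifferentiableAt ℝ H y)
    (hdU : ∀ y ∈ I, DifferentiableAt ℝ U y)
    (hΔ : ∀ y ∈ I, Dlt (H y) (U y) ≠ 0)
    (hODE1 : ∀ y ∈ I, y * deriv H y = F γ μ (H y) (U y) / Dlt (H y) (U y))
    (hODE2 : ∀ y ∈ I, y * deriv U y = G γ μ (H y) (U y) / Dlt (H y) (U y)) :
    ∀ p : ℝ × ℝ, p.1 < 0 → 0 < p.2 → p.2 / (-p.1) ^ δ ∈ I →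
      (fderiv ℝ (hAnsatz γ δ H) p (1, 0)
        + uAnsatz δ U p * fderiv ℝ (hAnsatz γ δ H) p (0, 1)
        + (γ - 1) * hAnsatz γ δ H p * fderiv ℝ (uAnsatz δ U) p (0, 1) = 0) ∧
      (fderiv ℝ (uAnsatz δ U) p (1, 0)
        + uAnsatz δ U p * fderiv ℝ (uAnsatz δ U) p (0, 1)
        + fderiv ℝ (hAnsatz γ δ H) p (0, 1) = 0) := by
  intro p hp hx hy
  have hA := hODE1 _ hy
  have hB := hODE2 _ hy
  have hD := hΔ _ hy
  rw [fderiv_hAnsatz γ δ H p hp (hdH _ hy), fderiv_hAnsatz γ δ H p hp (hdH _ hy),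
    fderiv_uAnsatz δ U p hp (hdU _ hy), fderiv_uAnsatz δ U p hp (hdU _ hy),
    uAnsatz_eq δ U p hp, hAnsatz_eq γ δ H p hp]
  have hs : 0 < -p.1 := by linarith
  have hr : 0 < (-p.1) ^ δ := Real.rpow_pos_of_pos hs δ
  have hg : γ - 1 ≠ 0 := by linarith
  have hyx : 1 / (-p.1) ^ δ = (p.2 / (-p.1) ^ δ) / p.2 := by field_simp
  rw [hyx]
  clear hyx
  generalize p.2 / (-p.1) ^ δ = y at *
  generalize -p.1 = s at *
  generalize p.2 = x at *
  generalize deriv H y = H' at *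
  generalize deriv U y = U' at *
  generalize H y = h at *
  generalize U y = w at *
  have hδμ : δ * μ = 1 := by rw [hμδ]; field_simp
  -- the two reduced algebraic identities
  have e1 : 2 * μ * h + y * H' - w * (2 * h + y * H') - (γ - 1) * h * (w + y * U') = 0 := by
    rw [hA, hB]
    unfold F G k₁ k₂
    unfold Dlt at *
    field_simp
    ring
  have e2 : -μ * w - y * U' + w * (w + y * U') + (2 * h + y * H') / (γ - 1) = 0 := by
    rw [hA, hB]
    unfold F G k₁ k₂
    unfold Dlt at *
    field_simp
    ring
  have hδ0 : δ ≠ 0 := hδ.ne'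
  constructor
  · refine Eq.trans (b := δ ^ 3 * x ^ 2 / (s ^ 3 * (γ - 1)) * (2 * μ * h + y * H' - w * (2 * h + y * H')
        - (γ - 1) * h * (w + y * U'))) ?_ (by rw [e1, mul_zero])
    rw [hμδ]
    field_simp
    ring
  · refine Eq.trans (b := δ ^ 2 * x / s ^ 2 * (-μ * w - y * U' + w * (w + y * U')
        + (2 * h + y * H') / (γ - 1))) ?_ (by rw [e2, mul_zero])
    rw [hμδ]
    field_simp
    ring
end
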